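/- arXiv:1311.5775 — 3 statements merged into one kernel-verified Lean document; each statement's English description precedes it below -/
import Mathlib

section
/- Let m ≥ 1 and let A₁, A₂ ∈ ℂ[t] be polynomials of degree 2m such that A₁ has exactly m roots (counted with multiplicity) in the open upper half-plane ℂ₊ = {z : Im z > 0} and exactly m roots in the open lower half-plane ℂ₋ = {z : Im z < 0}, and likewise for A₂ (in particular neither polynomial has a real root). Then for every vector h = (h₁,…,h_{2m}) ∈ ℂ^{2m} there exists exactly one pair (u₁, u₂) of smooth functions u₁ : [0,∞) → ℂ and u₂ : (−∞,0] → ℂ such that A₁(D_n)u₁ = 0 on (0,∞), A₂(D_n)u₂ = 0 on (−∞,0), the transmission conditions D_n^{j−1}u₁(0) − D_n^{j−1}u₂(0) = h_j hold for j = 1,…,2m, u₁(x_n) → 0 as x_n → +∞, and u₂(x_n) → 0 as x_n → −∞. -/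
noncomputable section
open scoped ENNReal
open Complex Filter Set

/-- `P(D_n) u` at `x`, where `D_n = -i d/dx` and `P` is a polynomial. -/
def polyOp (P : Polynomial ℂ) (u : ℝ → ℂ) (x : ℝ) : ℂ :=
  ∑ k ∈ Finset.range (P.natDegree + 1), P.coeff k * ((-Complex.I) ^ k * iteratedDeriv k u x)

/-- Solution predicate for the mixed transmission ODE problem: `u₁` solves `A₁(D_n)u₁ = 0`
on `(0,∞)`, `u₂` solves `A₂(D_n)u₂ = 0` on `(-∞,0)`, the canonical transmission conditions
`D_n^{j-1}u₁(0) - D_n^{j-1}u₂(0) = h_j` hold for `j = 1,…,2m`, and both functions decay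
at `+∞` resp. `-∞`. -/
def TransSol (m : ℕ) (A₁ A₂ : Polynomial ℂ) (h : Fin (2 * m) → ℂ) (u₁ u₂ : ℝ → ℂ) : Prop :=
  ContDiff ℝ (⊤ : ℕ∞) u₁ ∧ ContDiff ℝ (⊤ : ℕ∞) u₂ ∧
  (∀ x : ℝ, 0 < x → polyOp A₁ u₁ x = 0) ∧
  (∀ x : ℝ, x < 0 → polyOp A₂ u₂ x = 0) ∧
  (∀ j : Fin (2 * m),
    (-Complex.I) ^ (j : ℕ) * iteratedDeriv (j : ℕ) u₁ 0
      - (-Complex.I) ^ (j : ℕ) * iteratedDeriv (j : ℕ) u₂ 0 = h j) ∧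
  Tendsto u₁ atTop (nhds 0) ∧ Tendsto u₂ atBot (nhds 0)

/-!
Write `A₁ = P₁ * S₁` and `A₂ = P₂ * S₂`, where the roots of `P₁` are those of `A₁` in the upper
half-plane and the roots of `P₂` are those of `A₂` in the lower half-plane. The solutions of
`A₁(D_n)u = 0` on `(0, ∞)` that decay at `+∞` are the restrictions of `ker P₁(D_n)`, and the
solutions of `A₂(D_n)u = 0` on `(-∞, 0)` that decay at `-∞` are the restrictions of `ker P₂(D_n)`.
As `P₁` and `P₂` are coprime of total degree `2m`, `ker (P₁P₂)(D_n)` is the direct sum of these two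
kernels, and evaluating Cauchy data at `0` identifies it with `ℂ^{2m}`. The transmission conditions
prescribe exactly the Cauchy data of `u₁ - u₂`.
-/

open Polynomial Topology

section LinearAlgebra

variable {K M : Type*} [Field K] [AddCommGroup M] [Module K M]

theorem natDegree_X_sub_C_mul {z : K} {B : K[X]} (hB : B ≠ 0) :
    ((X - C z) * B).natDegree = B.natDegree + 1 := by
  rw [natDegree_mul (X_sub_C_ne_zero z) hB, natDegree_X_sub_C, add_comm]

@[elab_as_elim]
theorem induction_on_linear_factors [IsAlgClosed K] {motive : (A : K[X]) → A ≠ 0 → Prop}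
    (const : ∀ (a : K) (ha : a ≠ 0), motive (C a) (C_ne_zero.2 ha))
    (linear_mul : ∀ (z : K) (B : K[X]) (hB : B ≠ 0), motive B hB →
      motive ((X - C z) * B) (mul_ne_zero (X_sub_C_ne_zero z) hB))
    (A : K[X]) (hA : A ≠ 0) : motive A hA := by
  induction hn : A.natDegree generalizing A with
  | zero =>
    obtain ⟨a, rfl⟩ := natDegree_eq_zero.1 hn
    exact const a (C_ne_zero.1 hA)
  | succ n ih =>
    have hdeg : A.degree ≠ 0 := by
      rw [degree_eq_natDegree hA, hn]
      exact_mod_cast n.succ_ne_zero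
    obtain ⟨z, hz⟩ := IsAlgClosed.exists_root A hdeg
    obtain ⟨B, rfl⟩ := dvd_iff_isRoot.2 hz
    have hB : B ≠ 0 := right_ne_zero_of_mul hA
    have hBn : B.natDegree = n := Nat.succ_injective ((natDegree_X_sub_C_mul hB).symm.trans hn)
    exact linear_mul z B hB (ih B hB hBn)

theorem exists_mul_eq_of_roots_filter [IsAlgClosed K] (p : K → Prop) [DecidablePred p]
    {A : K[X]} (hA : A ≠ 0) :
    ∃ P S : K[X], P * S = A ∧ P.natDegree = (A.roots.filter p).card ∧
      (∀ z, P.IsRoot z → p z) ∧ ∀ z, S.IsRoot z → ¬p z := by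
  let factor (s : Multiset K) : K[X] := (s.map (X - C ·)).prod
  have mem_of_isRoot (s : Multiset K) {z : K} (hz : (factor s).IsRoot z) : z ∈ s := by
    rwa [← mem_roots (monic_multisetProd_X_sub_C s).ne_zero,
      roots_multiset_prod_X_sub_C] at hz
  refine ⟨factor (A.roots.filter p), C A.leadingCoeff * factor (A.roots.filter (¬p ·)),
    ?_, natDegree_multiset_prod_X_sub_C_eq_card _, fun z hz => ?_, fun z hz => ?_⟩
  · rw [mul_left_comm, ← Multiset.prod_add, ← Multiset.map_add, Multiset.filter_add_not]
    exact (IsAlgClosed.splits A).eq_prod_roots.symm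
  · exact Multiset.of_mem_filter (mem_of_isRoot _ hz)
  · have hroot : (factor (A.roots.filter (¬p ·))).IsRoot z := by
      simpa [IsRoot.def, hA] using hz
    exact Multiset.of_mem_filter (p := (¬p ·)) (mem_of_isRoot _ hroot)

theorem isCoprime_of_forall_isRoot [IsAlgClosed K] {P Q : K[X]}
    (h : ∀ z, P.IsRoot z → ¬Q.IsRoot z) : IsCoprime P Q := by
  rw [isCoprime_iff_aeval_ne_zero_of_isAlgClosed (k := K) K]
  intro z
  simpa only [coe_aeval_eq_eval, IsRoot.def, ← not_and_or, not_and] using h z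

variable {T : Module.End K M}

theorem aeval_mul_apply (P Q : K[X]) (f : M) :
    aeval T (P * Q) f = aeval T P (aeval T Q f) := by
  rw [map_mul, Module.End.mul_apply]

theorem aeval_X_sub_C_apply (z : K) (f : M) : aeval T (X - C z) f = T f - z • f := by
  simp [Module.algebraMap_end_apply]

theorem aeval_X_sub_C_mul_apply (z : K) (B : K[X]) (f : M) :
    aeval T ((X - C z) * B) f = aeval T B (T f - z • f) := by
  rw [mul_comm, aeval_mul_apply, aeval_X_sub_C_apply]

theorem aeval_C_apply (a : K) (f : M) : aeval T (C a) f = a • f := by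
  rw [aeval_C, Module.algebraMap_end_apply]

theorem exists_add_of_aeval_mul_eq_zero {P Q : K[X]} (hPQ : IsCoprime P Q) {f : M}
    (hf : aeval T (P * Q) f = 0) :
    ∃ g h : M, aeval T P g = 0 ∧ aeval T Q h = 0 ∧ g + h = f := by
  have hmem : f ∈ LinearMap.ker (aeval T P) ⊔ LinearMap.ker (aeval T Q) := by
    rwa [sup_ker_aeval_eq_ker_aeval_mul_of_coprime T hPQ]
  obtain ⟨g, hg, h, hh, hgh⟩ := Submodule.mem_sup.1 hmem
  exact ⟨g, h, hg, hh, hgh⟩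

theorem exists_resolvent {S : K[X]} {z : K} (hz : ¬S.IsRoot z) :
    ∃ R : K[X], ∀ f : M, aeval T S f = 0 → T (aeval T R f) - z • aeval T R f = f := by
  have hcoprime : IsCoprime (X - C z) S :=
    (irreducible_X_sub_C z).coprime_iff_not_dvd.2 fun h => hz (dvd_iff_isRoot.1 h)
  obtain ⟨R, B, hRB⟩ := hcoprime
  refine ⟨R, fun f hf => ?_⟩
  calc T (aeval T R f) - z • aeval T R f
      = aeval T (R * (X - C z)) f := by rw [mul_comm, aeval_mul_apply, aeval_X_sub_C_apply]
    _ = aeval T (R * (X - C z) + B * S) f := by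
      rw [map_add, LinearMap.add_apply, aeval_mul_apply B, hf, map_zero, add_zero]
    _ = f := by rw [hRB, map_one, Module.End.one_apply]

variable [IsAlgClosed K] {W : Submodule K M}

theorem mem_of_aeval_mem {A : K[X]} (hA : A ≠ 0)
    (hW : ∀ z, A.IsRoot z → ∀ f, T f - z • f ∈ W → f ∈ W) {f : M} (hf : aeval T A f ∈ W) :
    f ∈ W := by
  induction A, hA using induction_on_linear_factors generalizing f with
  | const a ha =>
    rw [aeval_C_apply] at hf
    exact (W.smul_mem_iff ha).1 hf
  | linear_mul z B _ ih =>
    rw [aeval_X_sub_C_mul_apply] at hf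
    exact hW z (root_mul_right_of_isRoot B (root_X_sub_C.2 rfl)) f
      (ih (fun w hw => hW w (root_mul_left_of_isRoot _ hw)) hf)

/- For a root `z` of `S = (X - z)B`, the vector `g = (T - z)(T - μ)⁻¹f = f + (μ - z)(T - μ)⁻¹f`
again lies in `W`, and `B` kills it. -/
theorem eq_zero_of_aeval_eq_zero {S : K[X]} (hS : S ≠ 0) {μ : K} (hμS : ¬S.IsRoot μ)
    (hμ : ∀ f, T f - μ • f ∈ W → f ∈ W)
    (hW : ∀ z, S.IsRoot z → ∀ f ∈ W, T f - z • f = 0 → f = 0)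
    {f : M} (hfW : f ∈ W) (hf : aeval T S f = 0) : f = 0 := by
  induction S, hS using induction_on_linear_factors generalizing f with
  | const a ha =>
    rw [aeval_C_apply] at hf
    exact (smul_eq_zero.1 hf).resolve_left ha
  | linear_mul z B _ ih =>
    obtain ⟨R, hR⟩ := exists_resolvent (T := T) hμS
    set r := aeval T R f with hr
    have hrf : T r - μ • r = f := hR f hf
    have hrW : r ∈ W := hμ r (hrf ▸ hfW)
    have hgW : T r - z • r ∈ W := by
      rw [show T r - z • r = f + (μ - z) • r by rw [← hrf]; module]
      exact W.add_mem hfW (W.smul_mem _ hrW)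
    have hBg : aeval T B (T r - z • r) = 0 := by
      rw [← aeval_X_sub_C_mul_apply, hr, ← aeval_mul_apply, mul_comm, aeval_mul_apply, hf,
        map_zero]
    have hg : T r - z • r = 0 :=
      ih (fun h => hμS (root_mul_left_of_isRoot _ h))
        (fun w hw => hW w (root_mul_left_of_isRoot _ hw)) hgW hBg
    have hr0 : r = 0 := hW z (root_mul_right_of_isRoot B (root_X_sub_C.2 rfl)) r hrW hg
    rw [← hrf, hr0, map_zero, smul_zero, sub_zero]

theorem aeval_left_eq_zero_of_mem {P S : K[X]} (hP : P ≠ 0) (hS : S ≠ 0)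
    (hPS : IsCoprime P S) {μ : K} (hμS : ¬S.IsRoot μ) (hμ : ∀ f, T f - μ • f ∈ W → f ∈ W)
    (hPW : ∀ z, P.IsRoot z → ∀ f, T f - z • f ∈ W → f ∈ W)
    (hSW : ∀ z, S.IsRoot z → ∀ f ∈ W, T f - z • f = 0 → f = 0)
    {f : M} (hfW : f ∈ W) (hf : aeval T (P * S) f = 0) : aeval T P f = 0 := by
  obtain ⟨g, h, hg, hh, rfl⟩ := exists_add_of_aeval_mul_eq_zero hPS hf
  have hgW : g ∈ W := mem_of_aeval_mem hP hPW (hg ▸ W.zero_mem)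
  have hhW : h ∈ W := (W.add_mem_iff_right hgW).1 hfW
  rw [eq_zero_of_aeval_eq_zero hS hμS hμ hSW hhW hh, add_zero, hg]

end LinearAlgebra

section FirstOrder

variable {E : Type*} [NormedAddCommGroup E] [NormedSpace ℂ E] {f : ℝ → E} {r : ℂ}

theorem hasDerivAt_cexp_mul_sub (r : ℂ) (x₀ x : ℝ) :
    HasDerivAt (fun y : ℝ => cexp (r * (y - x₀))) (r * cexp (r * (x - x₀))) x := by
  have h := (((hasDerivAt_id (x : ℂ)).sub_const (x₀ : ℂ)).const_mul r).cexp.comp_ofReal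
  simpa [mul_comm] using h

theorem norm_cexp_mul_sub (r : ℂ) (x₀ x : ℝ) :
    ‖cexp (r * (x - x₀))‖ = Real.exp (r.re * (x - x₀)) := by
  rw [Complex.norm_exp, ← ofReal_sub, re_mul_ofReal]

theorem hasDerivAt_cexp_smul (hf : Differentiable ℝ f) (r : ℂ) (x₀ x : ℝ) :
    HasDerivAt (fun y : ℝ => cexp (-r * (y - x₀)) • f y)
      (cexp (-r * (x - x₀)) • (deriv f x - r • f x)) x := by
  refine ((hasDerivAt_cexp_mul_sub (-r) x₀ x).smul (hf x).hasDerivAt).congr_deriv ?_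
  module

theorem cexp_smul_cexp_neg_smul (r : ℂ) (x₀ x : ℝ) (v : E) :
    cexp (r * (x - x₀)) • cexp (-r * (x - x₀)) • v = v := by
  rw [smul_smul, ← Complex.exp_add, neg_mul, add_neg_cancel, Complex.exp_zero, one_smul]

theorem eqOn_closure_cexp_of_deriv_eq_smul {s : Set ℝ} (hs : IsOpen s) (hs' : IsPreconnected s)
    {x₀ : ℝ} (hx₀ : x₀ ∈ closure s) (hf : Differentiable ℝ f)
    (hderiv : ∀ x ∈ s, deriv f x - r • f x = 0) :
    EqOn f (fun x => cexp (r * (x - x₀)) • f x₀) (closure s) := by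
  set g : ℝ → E := fun x => cexp (-r * (x - x₀)) • f x with hg
  have hg' (x : ℝ) : HasDerivAt g _ x := hasDerivAt_cexp_smul hf r x₀ x
  have hgd : Differentiable ℝ g := fun x => (hg' x).differentiableAt
  obtain ⟨c, hc⟩ := hs.exists_is_const_of_deriv_eq_zero hs' hgd.differentiableOn
    fun x hx => by rw [(hg' x).deriv, hderiv x hx, smul_zero, Pi.zero_apply]
  have hconst : EqOn g (fun _ => c) (closure s) :=
    EqOn.closure hc hgd.continuous continuous_const
  have hgx₀ : g x₀ = f x₀ := by simp [hg]
  intro x hx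
  calc f x = cexp (r * (x - x₀)) • g x := (cexp_smul_cexp_neg_smul r x₀ x (f x)).symm
    _ = cexp (r * (x - x₀)) • f x₀ := by rw [hconst hx, ← hconst hx₀, hgx₀]

theorem eq_zero_of_deriv_eq_smul_of_tendsto_zero {l : Filter ℝ} [l.NeBot]
    (hl : ∀ᶠ x : ℝ in l, 0 ≤ r.re * x) (hf : Differentiable ℝ f)
    (hderiv : ∀ x, deriv f x - r • f x = 0) (hlim : Tendsto f l (𝓝 0)) : f = 0 := by
  have hexp (x : ℝ) : f x = cexp (r * (x - (0 : ℝ))) • f 0 :=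
    eqOn_closure_cexp_of_deriv_eq_smul isOpen_univ isPreconnected_univ (by simp) hf
      (fun y _ => hderiv y) (by simp)
  have hle : ∀ᶠ x : ℝ in l, ‖f 0‖ ≤ ‖f x‖ := by
    filter_upwards [hl] with x hx
    rw [hexp x, norm_smul, norm_cexp_mul_sub, sub_zero]
    exact le_mul_of_one_le_left (norm_nonneg _) (Real.one_le_exp hx)
  have hf0 : f 0 = 0 := norm_le_zero_iff.1 (ge_of_tendsto (by simpa using hlim.norm) hle)
  funext x
  rw [hexp x, hf0, smul_zero, Pi.zero_apply]

/- The bound `B` solves `B' = c * exp (-r.re * (y - x₀))` with `B x₀ = ‖f x₀‖`. -/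
theorem norm_le_of_norm_deriv_sub_smul_le (hf : Differentiable ℝ f) (hr : r.re < 0) {c x₀ x : ℝ}
    (hc : ∀ y ≥ x₀, ‖deriv f y - r • f y‖ ≤ c) (hx : x₀ ≤ x) :
    ‖f x‖ ≤ Real.exp (r.re * (x - x₀)) * ‖f x₀‖ + c / -r.re := by
  set g : ℝ → E := fun y => cexp (-r * (y - x₀)) • f y with hg
  set B : ℝ → ℝ := fun y => ‖f x₀‖ + c / -r.re * (Real.exp (-r.re * (y - x₀)) - 1) with hB
  have hg' (y : ℝ) : HasDerivAt g _ y := hasDerivAt_cexp_smul hf r x₀ y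
  have hB' (y : ℝ) : HasDerivAt B (c * Real.exp (-r.re * (y - x₀))) y := by
    have h := ((((hasDerivAt_id y).sub_const x₀).const_mul (-r.re)).exp.sub_const
      1).const_mul (c / -r.re) |>.const_add ‖f x₀‖
    refine h.congr_deriv ?_
    have := hr.ne
    simp only [id_eq]
    field_simp
  have hgB : ‖g x‖ ≤ B x := by
    refine image_norm_le_of_norm_deriv_right_le_deriv_boundary (a := x₀) (b := x)
      (fun y _ => (hg' y).continuousAt.continuousWithinAt)
      (fun y _ => (hg' y).hasDerivWithinAt) (by simp [hg, hB]) hB' (fun y hy => ?_) ⟨hx, le_rfl⟩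
    rw [norm_smul, norm_cexp_mul_sub, neg_re, mul_comm c]
    exact mul_le_mul_of_nonneg_left (hc y hy.1) (Real.exp_pos _).le
  have hc0 : 0 ≤ c / -r.re :=
    div_nonneg ((norm_nonneg _).trans (hc x₀ le_rfl)) (neg_pos.2 hr).le
  have hexp : Real.exp (r.re * (x - x₀)) * Real.exp (-r.re * (x - x₀)) = 1 := by
    rw [← Real.exp_add, neg_mul, add_neg_cancel, Real.exp_zero]
  calc ‖f x‖ = Real.exp (r.re * (x - x₀)) * ‖g x‖ := by
        rw [← norm_cexp_mul_sub, ← norm_smul, hg, cexp_smul_cexp_neg_smul]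
    _ ≤ Real.exp (r.re * (x - x₀)) * B x := by gcongr
    _ = Real.exp (r.re * (x - x₀)) * ‖f x₀‖ + c / -r.re
        - c / -r.re * Real.exp (r.re * (x - x₀)) := by
      simp only [hB]; linear_combination (c / -r.re) * hexp
    _ ≤ Real.exp (r.re * (x - x₀)) * ‖f x₀‖ + c / -r.re :=
      sub_le_self _ (mul_nonneg hc0 (Real.exp_pos _).le)

theorem tendsto_atTop_zero_of_deriv_sub_smul (hf : Differentiable ℝ f) (hr : r.re < 0)
    (h : Tendsto (fun x => deriv f x - r • f x) atTop (𝓝 0)) : Tendsto f atTop (𝓝 0) := by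
  rw [tendsto_zero_iff_norm_tendsto_zero, Metric.tendsto_nhds] at h ⊢
  intro ε hε
  have hr' : 0 < -r.re := neg_pos.2 hr
  obtain ⟨x₀, hx₀⟩ := eventually_atTop.1 (h (ε / 2 * -r.re) (by positivity))
  have hc : ∀ y ≥ x₀, ‖deriv f y - r • f y‖ ≤ ε / 2 * -r.re := fun y hy => by
    simpa using (hx₀ y hy).le
  have hdecay : Tendsto (fun x => Real.exp (r.re * (x - x₀)) * ‖f x₀‖) atTop (𝓝 0) := by
    have hbot : Tendsto (fun x => r.re * (x - x₀)) atTop atBot :=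
      (tendsto_atTop_add_const_right _ (-x₀) tendsto_id).const_mul_atTop_of_neg hr
    simpa using (Real.tendsto_exp_atBot.comp hbot).mul_const ‖f x₀‖
  filter_upwards [hdecay.eventually_lt_const (half_pos hε), eventually_ge_atTop x₀] with x hx hxx₀
  have hle := norm_le_of_norm_deriv_sub_smul_le hf hr hc hxx₀
  rw [mul_div_cancel_right₀ _ hr'.ne'] at hle
  rw [dist_zero_right, norm_norm]
  linarith

theorem tendsto_atBot_zero_of_deriv_sub_smul (hf : Differentiable ℝ f) (hr : 0 < r.re)
    (h : Tendsto (fun x => deriv f x - r • f x) atBot (𝓝 0)) : Tendsto f atBot (𝓝 0) := by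
  have hreflect : Tendsto (fun x => f (-x)) atTop (𝓝 0) := by
    refine tendsto_atTop_zero_of_deriv_sub_smul (r := -r) (hf.comp differentiable_neg)
      (by simpa using hr) ?_
    refine (neg_zero (G := E) ▸ (h.comp tendsto_neg_atTop_atBot).neg).congr fun x => ?_
    simp only [Function.comp_apply, deriv_comp_neg]
    module
  simpa only [Function.comp_def, neg_neg] using hreflect.comp tendsto_neg_atBot_atTop

theorem exists_contDiff_deriv_sub_smul_eq [CompleteSpace E] (r : ℂ) {g : ℝ → E}
    (hg : ContDiff ℝ (⊤ : ℕ∞) g) (x₀ : ℝ) (c : E) :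
    ∃ f : ℝ → E, ContDiff ℝ (⊤ : ℕ∞) f ∧ (∀ x, deriv f x - r • f x = g x) ∧ f x₀ = c := by
  have hexp (a : ℂ) : ContDiff ℝ (⊤ : ℕ∞) (fun x : ℝ => cexp (a * (x - x₀))) :=
    (contDiff_const.mul (ofRealCLM.contDiff.sub contDiff_const)).cexp
  set q : ℝ → E := fun t => cexp (-r * (t - x₀)) • g t with hq
  have hqs : ContDiff ℝ (⊤ : ℕ∞) q := (hexp (-r)).smul hg
  set G : ℝ → E := fun x => c + ∫ t in x₀..x, q t with hG
  have hG' (x : ℝ) : HasDerivAt G (q x) x :=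
    (hqs.continuous.integral_hasStrictDerivAt x₀ x).hasDerivAt.const_add c
  have hGs : ContDiff ℝ (⊤ : ℕ∞) G := by
    rw [contDiff_infty_iff_deriv, funext fun x => (hG' x).deriv]
    exact ⟨fun x => (hG' x).differentiableAt, hqs⟩
  refine ⟨fun x => cexp (r * (x - x₀)) • G x, (hexp r).smul hGs, fun x => ?_, by simp [hG]⟩
  have hderiv : deriv (fun x : ℝ => cexp (r * (x - x₀)) • G x) x = _ :=
    ((hasDerivAt_cexp_mul_sub r x₀ x).smul (hG' x)).deriv
  rw [hderiv, hq, cexp_smul_cexp_neg_smul]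
  module

end FirstOrder

section SmoothFunctions

/-- The space of smooth functions `ℝ → ℂ`, on which polynomials in `D_n` act. -/
def smoothFun : Submodule ℂ (ℝ → ℂ) where
  carrier := {u | ContDiff ℝ (⊤ : ℕ∞) u}
  add_mem' {u v} (hu : ContDiff ℝ (⊤ : ℕ∞) u) (hv : ContDiff ℝ (⊤ : ℕ∞) v) := hu.add hv
  zero_mem' := (contDiff_const : ContDiff ℝ (⊤ : ℕ∞) fun _ => (0 : ℂ))
  smul_mem' c u (hu : ContDiff ℝ (⊤ : ℕ∞) u) := hu.const_smul c

theorem contDiff_smoothFun (u : smoothFun) : ContDiff ℝ (⊤ : ℕ∞) u.1 := u.2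

theorem differentiable_smoothFun (u : smoothFun) : Differentiable ℝ u.1 :=
  (contDiff_smoothFun u).differentiable (by simp)

/-- The operator `D_n = -i d/dx` on smooth functions. -/
def Dn : Module.End ℂ smoothFun where
  toFun u := ⟨fun x => -I * deriv u.1 x,
    contDiff_const.mul (contDiff_infty_iff_deriv.1 (contDiff_smoothFun u)).2⟩
  map_add' u v := by
    ext x
    have h := deriv_add (differentiable_smoothFun u x) (differentiable_smoothFun v x)
    simp only [Submodule.coe_add, Pi.add_apply, h, mul_add]
  map_smul' c u := by
    ext x
    have h := deriv_const_smul c (differentiable_smoothFun u x)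
    simp only [Submodule.coe_smul, Pi.smul_apply, RingHom.id_apply, h, mul_smul_comm]

theorem Dn_apply (u : smoothFun) (x : ℝ) : (Dn u).1 x = -I * deriv u.1 x := rfl

theorem Dn_sub_smul_apply (z : ℂ) (u : smoothFun) (x : ℝ) :
    (Dn u - z • u).1 x = -I * (deriv u.1 x - (I * z) • u.1 x) := by
  simp only [Submodule.coe_sub, Submodule.coe_smul, Pi.sub_apply, Pi.smul_apply, Dn_apply,
    smul_eq_mul]
  linear_combination -z * u.1 x * I_mul_I

theorem Dn_sub_smul_apply_eq_zero_iff {z : ℂ} {u : smoothFun} {x : ℝ} :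
    (Dn u - z • u).1 x = 0 ↔ deriv u.1 x - (I * z) • u.1 x = 0 := by
  rw [Dn_sub_smul_apply, mul_eq_zero_iff_left (neg_ne_zero.2 I_ne_zero)]

theorem Dn_pow_apply (k : ℕ) (u : smoothFun) (x : ℝ) :
    ((Dn ^ k) u).1 x = (-I) ^ k * iteratedDeriv k u.1 x := by
  induction k generalizing x with
  | zero => simp
  | succ k ih =>
    rw [pow_succ', Module.End.mul_apply, Dn_apply, funext ih, deriv_const_mul_field,
      iteratedDeriv_succ, pow_succ', mul_assoc]

theorem polyOp_eq_aeval_Dn (A : ℂ[X]) (u : smoothFun) (x : ℝ) :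
    polyOp A u.1 x = (aeval Dn A u).1 x := by
  simp [polyOp, aeval_eq_sum_range, LinearMap.sum_apply, Finset.sum_apply, Dn_pow_apply]

theorem exists_Dn_sub_smul_eq (z : ℂ) (g : smoothFun) (x₀ : ℝ) (c : ℂ) :
    ∃ u : smoothFun, Dn u - z • u = g ∧ u.1 x₀ = c := by
  obtain ⟨u, hu, hderiv, hx₀⟩ := exists_contDiff_deriv_sub_smul_eq (I * z)
    (contDiff_const.mul (contDiff_smoothFun g) : ContDiff ℝ (⊤ : ℕ∞) fun x => I * g.1 x) x₀ c
  refine ⟨⟨u, hu⟩, Subtype.ext (funext fun x => ?_), hx₀⟩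
  rw [Dn_sub_smul_apply, hderiv, ← mul_assoc, neg_mul, I_mul_I, neg_neg, one_mul]

theorem Dn_pow_succ_apply_of_Dn_sub_smul_eq {z : ℂ} {u g : smoothFun} (h : Dn u - z • u = g)
    (j : ℕ) (x : ℝ) : ((Dn ^ (j + 1)) u).1 x = ((Dn ^ j) g).1 x + z * ((Dn ^ j) u).1 x := by
  rw [pow_succ, Module.End.mul_apply, sub_eq_iff_eq_add.1 h, map_add, map_smul]
  rfl

end SmoothFunctions

section CauchyProblem

variable {A : ℂ[X]} {u v : smoothFun} {s : Set ℝ} {x₀ : ℝ}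

theorem exists_aeval_Dn_eq_zero_of_cauchyData (hA : A ≠ 0) (x₀ : ℝ) (c : ℕ → ℂ) :
    ∃ u : smoothFun, aeval Dn A u = 0 ∧ ∀ j < A.natDegree, ((Dn ^ j) u).1 x₀ = c j := by
  induction A, hA using induction_on_linear_factors generalizing c with
  | const a _ => exact ⟨0, map_zero _, fun j hj => by simp at hj⟩
  | linear_mul z B hB ih =>
    obtain ⟨g, hg, hgc⟩ := ih fun j => c (j + 1) - z * c j
    obtain ⟨u, hu, huc⟩ := exists_Dn_sub_smul_eq z g x₀ (c 0)
    refine ⟨u, by rw [aeval_X_sub_C_mul_apply, hu, hg], fun j hj => ?_⟩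
    rw [natDegree_X_sub_C_mul hB] at hj
    induction j with
    | zero => exact huc
    | succ j ihj =>
      rw [Dn_pow_succ_apply_of_Dn_sub_smul_eq hu, hgc j (by omega), ihj (by omega),
        sub_add_cancel]

theorem eqOn_closure_zero_of_cauchyData_eq_zero (hA : A ≠ 0) (hs : IsOpen s)
    (hs' : IsPreconnected s) (hx₀ : x₀ ∈ closure s) (hu : EqOn (aeval Dn A u).1 0 s)
    (hdata : ∀ j < A.natDegree, ((Dn ^ j) u).1 x₀ = 0) : EqOn u.1 0 (closure s) := by
  induction A, hA using induction_on_linear_factors generalizing u with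
  | const a ha =>
    refine EqOn.closure (fun x hx => ?_) (differentiable_smoothFun u).continuous continuous_zero
    have hax : a * u.1 x = 0 := by simpa [aeval_C_apply] using hu hx
    exact (mul_eq_zero.1 hax).resolve_left ha
  | linear_mul z B hB ih =>
    rw [aeval_X_sub_C_mul_apply] at hu
    rw [natDegree_X_sub_C_mul hB] at hdata
    have hfirst : EqOn (Dn u - z • u).1 0 (closure s) := ih hu fun j hj => by
      have h := Dn_pow_succ_apply_of_Dn_sub_smul_eq (z := z) (u := u) rfl j x₀
      rwa [hdata (j + 1) (by omega), hdata j (by omega), mul_zero, add_zero, eq_comm] at h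
    have hux₀ : u.1 x₀ = 0 := hdata 0 (Nat.succ_pos _)
    have hexp : EqOn u.1 (fun x => cexp (I * z * (x - x₀)) • u.1 x₀) (closure s) :=
      eqOn_closure_cexp_of_deriv_eq_smul hs hs' hx₀ (differentiable_smoothFun u) fun x hx =>
        Dn_sub_smul_apply_eq_zero_iff.1 (hfirst (subset_closure hx))
    exact fun x hx => by simpa only [hux₀, smul_zero, Pi.zero_apply] using hexp hx

theorem eq_zero_of_cauchyData_eq_zero (hA : A ≠ 0) (hu : aeval Dn A u = 0)
    (hdata : ∀ j < A.natDegree, ((Dn ^ j) u).1 x₀ = 0) : u = 0 := by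
  have h := eqOn_closure_zero_of_cauchyData_eq_zero hA isOpen_univ isPreconnected_univ
    (by simp) (fun x _ => by rw [hu]; rfl) hdata
  exact Subtype.ext (funext fun x => h (by simp))

theorem exists_global_solution_eqOn_closure (hA : A ≠ 0) (hs : IsOpen s)
    (hs' : IsPreconnected s) (hs₀ : s.Nonempty) (hu : EqOn (aeval Dn A u).1 0 s) :
    ∃ w : smoothFun, aeval Dn A w = 0 ∧ EqOn u.1 w.1 (closure s) := by
  obtain ⟨x₀, hx₀⟩ := hs₀
  obtain ⟨w, hw, hwdata⟩ :=
    exists_aeval_Dn_eq_zero_of_cauchyData hA x₀ fun j => ((Dn ^ j) u).1 x₀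
  have hdiff : EqOn (u - w).1 0 (closure s) := by
    refine eqOn_closure_zero_of_cauchyData_eq_zero hA hs hs' (subset_closure hx₀) ?_
      fun j hj => ?_
    · rwa [map_sub, hw, sub_zero]
    · rw [map_sub, Submodule.coe_sub, Pi.sub_apply, hwdata j hj, sub_self]
  exact ⟨w, hw, fun x hx => sub_eq_zero.1 (hdiff hx)⟩

theorem Dn_pow_eqOn_closure (hs : IsOpen s) (huv : EqOn u.1 v.1 s) (j : ℕ) :
    EqOn ((Dn ^ j) u).1 ((Dn ^ j) v).1 (closure s) := by
  refine EqOn.closure (fun x hx => ?_) (differentiable_smoothFun _).continuous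
    (differentiable_smoothFun _).continuous
  have hnhds : u.1 =ᶠ[𝓝 x] v.1 := huv.eventuallyEq_of_mem (hs.mem_nhds hx)
  rw [Dn_pow_apply, Dn_pow_apply, hnhds.iteratedDeriv_eq]

variable {P Q : ℂ[X]}

theorem exists_sub_of_isCoprime_of_cauchyData (hP : P ≠ 0) (hQ : Q ≠ 0) (hPQ : IsCoprime P Q)
    (x₀ : ℝ) (c : ℕ → ℂ) :
    ∃ u v : smoothFun, aeval Dn P u = 0 ∧ aeval Dn Q v = 0 ∧
      ∀ j < P.natDegree + Q.natDegree, ((Dn ^ j) u).1 x₀ - ((Dn ^ j) v).1 x₀ = c j := by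
  obtain ⟨w, hw, hwdata⟩ := exists_aeval_Dn_eq_zero_of_cauchyData (mul_ne_zero hP hQ) x₀ c
  rw [natDegree_mul hP hQ] at hwdata
  obtain ⟨u, v, hu, hv, rfl⟩ := exists_add_of_aeval_mul_eq_zero hPQ hw
  refine ⟨u, -v, hu, by rw [map_neg, hv, neg_zero], fun j hj => ?_⟩
  rw [← hwdata j hj, ← Pi.sub_apply, ← Submodule.coe_sub, ← map_sub, sub_neg_eq_add]

theorem eq_zero_of_isCoprime_of_cauchyData_eq (hP : P ≠ 0) (hQ : Q ≠ 0) (hPQ : IsCoprime P Q)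
    (hu : aeval Dn P u = 0) (hv : aeval Dn Q v = 0)
    (hdata : ∀ j < P.natDegree + Q.natDegree, ((Dn ^ j) u).1 x₀ = ((Dn ^ j) v).1 x₀) :
    u = 0 ∧ v = 0 := by
  have huv : u - v = 0 := by
    refine eq_zero_of_cauchyData_eq_zero (x₀ := x₀) (mul_ne_zero hP hQ) ?_ fun j hj => ?_
    · rw [map_sub, aeval_mul_apply P Q v, mul_comm, aeval_mul_apply Q P u, hu, hv, map_zero,
        map_zero, sub_zero]
    · rw [natDegree_mul hP hQ] at hj
      rw [map_sub, Submodule.coe_sub, Pi.sub_apply, hdata j hj, sub_self]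
  obtain rfl : u = v := sub_eq_zero.1 huv
  have hu0 : u = 0 := Submodule.disjoint_def.1 (disjoint_ker_aeval_of_isCoprime Dn hPQ) u hu hv
  exact ⟨hu0, hu0⟩

end CauchyProblem

section Decay

variable {l : Filter ℝ} {u : smoothFun} {z : ℂ} {P S : ℂ[X]}

/-- The smooth functions that tend to `0` along the filter `l`. -/
def tendstoZero (l : Filter ℝ) : Submodule ℂ smoothFun where
  carrier := {u | Tendsto u.1 l (𝓝 0)}
  add_mem' {u v} (hu : Tendsto u.1 l (𝓝 0)) (hv : Tendsto v.1 l (𝓝 0)) :=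
    add_zero (0 : ℂ) ▸ hu.add hv
  zero_mem' := (tendsto_const_nhds : Tendsto (fun _ => (0 : ℂ)) l (𝓝 0))
  smul_mem' c u (hu : Tendsto u.1 l (𝓝 0)) :=
    smul_zero (A := ℂ) c ▸ hu.const_smul c

theorem mem_tendstoZero : u ∈ tendstoZero l ↔ Tendsto u.1 l (𝓝 0) := Iff.rfl

theorem Dn_sub_smul_mem_tendstoZero :
    Dn u - z • u ∈ tendstoZero l ↔
      Tendsto (fun x => deriv u.1 x - (I * z) • u.1 x) l (𝓝 0) := by
  rw [mem_tendstoZero, funext (Dn_sub_smul_apply z u)]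
  refine ⟨fun h => ?_, fun h => by simpa using h.const_mul (-I)⟩
  simpa [← mul_assoc] using h.const_mul I

theorem mem_tendstoZero_atTop_of_Dn_sub_smul_mem (hz : 0 < z.im)
    (h : Dn u - z • u ∈ tendstoZero atTop) : u ∈ tendstoZero atTop :=
  tendsto_atTop_zero_of_deriv_sub_smul (differentiable_smoothFun u) (by simpa using hz)
    (Dn_sub_smul_mem_tendstoZero.1 h)

theorem mem_tendstoZero_atBot_of_Dn_sub_smul_mem (hz : z.im < 0)
    (h : Dn u - z • u ∈ tendstoZero atBot) : u ∈ tendstoZero atBot :=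
  tendsto_atBot_zero_of_deriv_sub_smul (differentiable_smoothFun u) (by simpa using hz)
    (Dn_sub_smul_mem_tendstoZero.1 h)

theorem eq_zero_of_Dn_sub_smul_eq_zero [l.NeBot] (hl : ∀ᶠ x : ℝ in l, z.im * x ≤ 0)
    (hu : u ∈ tendstoZero l) (h : Dn u - z • u = 0) : u = 0 := by
  refine Subtype.ext (eq_zero_of_deriv_eq_smul_of_tendsto_zero (r := I * z) (by simpa using hl)
    (differentiable_smoothFun u) (fun x => ?_) hu)
  rw [← Dn_sub_smul_apply_eq_zero_iff, h, Submodule.coe_zero, Pi.zero_apply]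

theorem aeval_left_eq_zero_of_mem_tendstoZero_atTop (hPS : P * S ≠ 0)
    (hP : ∀ z, P.IsRoot z → 0 < z.im) (hS : ∀ z, S.IsRoot z → ¬0 < z.im)
    (hu : u ∈ tendstoZero atTop) (h : aeval Dn (P * S) u = 0) : aeval Dn P u = 0 := by
  refine aeval_left_eq_zero_of_mem (left_ne_zero_of_mul hPS) (right_ne_zero_of_mul hPS)
    (isCoprime_of_forall_isRoot fun z hz hz' => hS z hz' (hP z hz)) (μ := I)
    (fun hI => hS I hI (by simp))
    (fun f => mem_tendstoZero_atTop_of_Dn_sub_smul_mem (by simp))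
    (fun z hz f => mem_tendstoZero_atTop_of_Dn_sub_smul_mem (hP z hz))
    (fun z hz f => eq_zero_of_Dn_sub_smul_eq_zero ?_) hu h
  filter_upwards [eventually_ge_atTop 0] with x hx
  exact mul_nonpos_of_nonpos_of_nonneg (not_lt.1 (hS z hz)) hx

theorem aeval_left_eq_zero_of_mem_tendstoZero_atBot (hPS : P * S ≠ 0)
    (hP : ∀ z, P.IsRoot z → z.im < 0) (hS : ∀ z, S.IsRoot z → ¬z.im < 0)
    (hu : u ∈ tendstoZero atBot) (h : aeval Dn (P * S) u = 0) : aeval Dn P u = 0 := by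
  refine aeval_left_eq_zero_of_mem (left_ne_zero_of_mul hPS) (right_ne_zero_of_mul hPS)
    (isCoprime_of_forall_isRoot fun z hz hz' => hS z hz' (hP z hz)) (μ := -I)
    (fun hI => hS (-I) hI (by simp))
    (fun f => mem_tendstoZero_atBot_of_Dn_sub_smul_mem (by simp))
    (fun z hz f => mem_tendstoZero_atBot_of_Dn_sub_smul_mem (hP z hz))
    (fun z hz f => eq_zero_of_Dn_sub_smul_eq_zero ?_) hu h
  filter_upwards [eventually_le_atBot 0] with x hx
  exact mul_nonpos_of_nonneg_of_nonpos (not_lt.1 (hS z hz)) hx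

theorem exists_eqOn_Ici_of_mem_tendstoZero_atTop (hPS : P * S ≠ 0)
    (hP : ∀ z, P.IsRoot z → 0 < z.im) (hS : ∀ z, S.IsRoot z → ¬0 < z.im) {x₀ : ℝ}
    (hu : u ∈ tendstoZero atTop) (h : EqOn (aeval Dn (P * S) u).1 0 (Ioi x₀)) :
    ∃ w : smoothFun, aeval Dn P w = 0 ∧ EqOn u.1 w.1 (Ici x₀) := by
  obtain ⟨w, hw, huw⟩ := exists_global_solution_eqOn_closure hPS isOpen_Ioi isPreconnected_Ioi
    nonempty_Ioi h
  rw [closure_Ioi] at huw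
  have hwlim : w ∈ tendstoZero atTop :=
    Tendsto.congr' (huw.eventuallyEq_of_mem (Ici_mem_atTop x₀)) hu
  exact ⟨w, aeval_left_eq_zero_of_mem_tendstoZero_atTop hPS hP hS hwlim hw, huw⟩

theorem exists_eqOn_Iic_of_mem_tendstoZero_atBot (hPS : P * S ≠ 0)
    (hP : ∀ z, P.IsRoot z → z.im < 0) (hS : ∀ z, S.IsRoot z → ¬z.im < 0) {x₀ : ℝ}
    (hu : u ∈ tendstoZero atBot) (h : EqOn (aeval Dn (P * S) u).1 0 (Iio x₀)) :
    ∃ w : smoothFun, aeval Dn P w = 0 ∧ EqOn u.1 w.1 (Iic x₀) := by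
  obtain ⟨w, hw, huw⟩ := exists_global_solution_eqOn_closure hPS isOpen_Iio isPreconnected_Iio
    nonempty_Iio h
  rw [closure_Iio] at huw
  have hwlim : w ∈ tendstoZero atBot :=
    Tendsto.congr' (huw.eventuallyEq_of_mem (Iic_mem_atBot x₀)) hu
  exact ⟨w, aeval_left_eq_zero_of_mem_tendstoZero_atBot hPS hP hS hwlim hw, huw⟩

end Decay

section Transmission

variable {m : ℕ} {A₁ A₂ P₁ S₁ P₂ S₂ : ℂ[X]} {h : Fin (2 * m) → ℂ}

theorem transSol_coe_iff {u₁ u₂ : smoothFun} :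
    TransSol m A₁ A₂ h u₁.1 u₂.1 ↔
      EqOn (aeval Dn A₁ u₁).1 0 (Ioi 0) ∧ EqOn (aeval Dn A₂ u₂).1 0 (Iio 0) ∧
      (∀ j : Fin (2 * m), ((Dn ^ (j : ℕ)) u₁).1 0 - ((Dn ^ (j : ℕ)) u₂).1 0 = h j) ∧
      u₁ ∈ tendstoZero atTop ∧ u₂ ∈ tendstoZero atBot := by
  simp only [TransSol, contDiff_smoothFun, true_and, polyOp_eq_aeval_Dn, ← Dn_pow_apply,
    mem_tendstoZero, EqOn, mem_Ioi, mem_Iio, Pi.zero_apply]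

theorem TransSol.sub {k : Fin (2 * m) → ℂ} {u₁ u₂ v₁ v₂ : ℝ → ℂ}
    (hu : TransSol m A₁ A₂ h u₁ u₂) (hv : TransSol m A₁ A₂ k v₁ v₂) :
    TransSol m A₁ A₂ (h - k) (u₁ - v₁) (u₂ - v₂) := by
  lift u₁ to smoothFun using hu.1
  lift u₂ to smoothFun using hu.2.1
  lift v₁ to smoothFun using hv.1
  lift v₂ to smoothFun using hv.2.1
  obtain ⟨hu₁, hu₂, hu, hu₁', hu₂'⟩ := transSol_coe_iff.1 hu
  obtain ⟨hv₁, hv₂, hv, hv₁', hv₂'⟩ := transSol_coe_iff.1 hv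
  rw [← Submodule.coe_sub, ← Submodule.coe_sub, transSol_coe_iff]
  refine ⟨fun x hx => ?_, fun x hx => ?_, fun j => ?_, Submodule.sub_mem _ hu₁' hv₁',
    Submodule.sub_mem _ hu₂' hv₂'⟩
  · simp [hu₁ hx, hv₁ hx]
  · simp [hu₂ hx, hv₂ hx]
  · simp only [map_sub, Submodule.coe_sub, Pi.sub_apply, ← hu, ← hv]
    ring

theorem exists_transSol (hA₁ : P₁ * S₁ ≠ 0) (hA₂ : P₂ * S₂ ≠ 0)
    (hP₁ : ∀ z, P₁.IsRoot z → 0 < z.im) (hP₂ : ∀ z, P₂.IsRoot z → z.im < 0)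
    (hdeg : P₁.natDegree + P₂.natDegree = 2 * m) (h : Fin (2 * m) → ℂ) :
    ∃ u₁ u₂ : ℝ → ℂ, TransSol m (P₁ * S₁) (P₂ * S₂) h u₁ u₂ := by
  have hP₁0 := left_ne_zero_of_mul hA₁
  have hP₂0 := left_ne_zero_of_mul hA₂
  obtain ⟨u₁, u₂, hu₁, hu₂, hdata⟩ := exists_sub_of_isCoprime_of_cauchyData hP₁0 hP₂0
    (isCoprime_of_forall_isRoot fun z hz hz' => (hP₁ z hz).not_gt (hP₂ z hz')) 0
    (Function.extend Fin.val h 0)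
  refine ⟨u₁.1, u₂.1, transSol_coe_iff.2 ⟨fun x _ => ?_, fun x _ => ?_, fun j => ?_, ?_, ?_⟩⟩
  · rw [mul_comm, aeval_mul_apply, hu₁, map_zero]; rfl
  · rw [mul_comm, aeval_mul_apply, hu₂, map_zero]; rfl
  · rw [hdata j (by omega), Fin.val_injective.extend_apply]
  · exact mem_of_aeval_mem hP₁0
      (fun z hz f => mem_tendstoZero_atTop_of_Dn_sub_smul_mem (hP₁ z hz))
      (hu₁ ▸ Submodule.zero_mem _)
  · exact mem_of_aeval_mem hP₂0
      (fun z hz f => mem_tendstoZero_atBot_of_Dn_sub_smul_mem (hP₂ z hz))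
      (hu₂ ▸ Submodule.zero_mem _)

theorem TransSol.eqOn_zero (hA₁ : P₁ * S₁ ≠ 0) (hA₂ : P₂ * S₂ ≠ 0)
    (hP₁ : ∀ z, P₁.IsRoot z → 0 < z.im) (hS₁ : ∀ z, S₁.IsRoot z → ¬0 < z.im)
    (hP₂ : ∀ z, P₂.IsRoot z → z.im < 0) (hS₂ : ∀ z, S₂.IsRoot z → ¬z.im < 0)
    (hdeg : P₁.natDegree + P₂.natDegree = 2 * m) {u₁ u₂ : ℝ → ℂ}
    (hu : TransSol m (P₁ * S₁) (P₂ * S₂) 0 u₁ u₂) :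
    EqOn u₁ 0 (Ici 0) ∧ EqOn u₂ 0 (Iic 0) := by
  lift u₁ to smoothFun using hu.1
  lift u₂ to smoothFun using hu.2.1
  obtain ⟨hu₁, hu₂, hdata, hlim₁, hlim₂⟩ := transSol_coe_iff.1 hu
  obtain ⟨w₁, hw₁, huw₁⟩ := exists_eqOn_Ici_of_mem_tendstoZero_atTop hA₁ hP₁ hS₁ hlim₁ hu₁
  obtain ⟨w₂, hw₂, huw₂⟩ := exists_eqOn_Iic_of_mem_tendstoZero_atBot hA₂ hP₂ hS₂ hlim₂ hu₂
  have hdata' : ∀ j < P₁.natDegree + P₂.natDegree, ((Dn ^ j) w₁).1 0 = ((Dn ^ j) w₂).1 0 := by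
    intro j hj
    rw [← Dn_pow_eqOn_closure isOpen_Ioi (huw₁.mono Ioi_subset_Ici_self) j (by simp),
      ← Dn_pow_eqOn_closure isOpen_Iio (huw₂.mono Iio_subset_Iic_self) j (by simp)]
    exact sub_eq_zero.1 (hdata ⟨j, hdeg ▸ hj⟩)
  obtain ⟨rfl, rfl⟩ := eq_zero_of_isCoprime_of_cauchyData_eq (left_ne_zero_of_mul hA₁)
    (left_ne_zero_of_mul hA₂)
    (isCoprime_of_forall_isRoot fun z hz hz' => (hP₁ z hz).not_gt (hP₂ z hz')) hw₁ hw₂ hdata'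
  exact ⟨huw₁, huw₂⟩

end Transmission

theorem transmission_ODE_unique_solvability_general
    (m : ℕ) {A₁ A₂ : ℂ[X]} (hA₁ : A₁ ≠ 0) (hA₂ : A₂ ≠ 0)
    (hroots : (A₁.roots.filter fun z => 0 < z.im).card +
      (A₂.roots.filter fun z => z.im < 0).card = 2 * m) (h : Fin (2 * m) → ℂ) :
    (∃ u₁ u₂ : ℝ → ℂ, TransSol m A₁ A₂ h u₁ u₂) ∧
    (∀ u₁ u₂ v₁ v₂ : ℝ → ℂ, TransSol m A₁ A₂ h u₁ u₂ → TransSol m A₁ A₂ h v₁ v₂ →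
      EqOn u₁ v₁ (Ici 0) ∧ EqOn u₂ v₂ (Iic 0)) := by
  obtain ⟨P₁, S₁, rfl, hdeg₁, hP₁, hS₁⟩ := exists_mul_eq_of_roots_filter (fun z => 0 < z.im) hA₁
  obtain ⟨P₂, S₂, rfl, hdeg₂, hP₂, hS₂⟩ := exists_mul_eq_of_roots_filter (fun z => z.im < 0) hA₂
  rw [← hdeg₁, ← hdeg₂] at hroots
  refine ⟨exists_transSol hA₁ hA₂ hP₁ hP₂ hroots h, fun u₁ u₂ v₁ v₂ hu hv => ?_⟩
  have hdiff : TransSol m (P₁ * S₁) (P₂ * S₂) 0 (u₁ - v₁) (u₂ - v₂) := by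
    simpa using hu.sub hv
  obtain ⟨h₁, h₂⟩ := hdiff.eqOn_zero hA₁ hA₂ hP₁ hS₁ hP₂ hS₂ hroots
  exact ⟨fun x hx => sub_eq_zero.1 (h₁ hx), fun x hx => sub_eq_zero.1 (h₂ hx)⟩

/-- If `A₁, A₂` are polynomials of degree `2m` having exactly `m` roots in the
open upper half-plane and `m` roots in the open lower half-plane (with multiplicity), then for
every `h ∈ ℂ^{2m}` the transmission ODE problem has exactly one solution pair `(u₁,u₂)`
(uniqueness on the respective half-lines `[0,∞)` and `(-∞,0]`). -/
theorem transmission_ODE_unique_solvability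
    (m : ℕ) (hm : 1 ≤ m) (A₁ A₂ : Polynomial ℂ)
    (hdeg₁ : A₁.natDegree = 2 * m) (hdeg₂ : A₂.natDegree = 2 * m)
    (hroots₁p : (A₁.roots.filter fun z => 0 < z.im).card = m)
    (hroots₁m : (A₁.roots.filter fun z => z.im < 0).card = m)
    (hroots₂p : (A₂.roots.filter fun z => 0 < z.im).card = m)
    (hroots₂m : (A₂.roots.filter fun z => z.im < 0).card = m)
    (h : Fin (2 * m) → ℂ) :
    (∃ u₁ u₂ : ℝ → ℂ, TransSol m A₁ A₂ h u₁ u₂) ∧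
    (∀ u₁ u₂ v₁ v₂ : ℝ → ℂ, TransSol m A₁ A₂ h u₁ u₂ → TransSol m A₁ A₂ h v₁ v₂ →
      EqOn u₁ v₁ (Ici 0) ∧ EqOn u₂ v₂ (Iic 0)) := by
  have hA₁ : A₁ ≠ 0 := ne_zero_of_natDegree_gt (n := 0) (by omega)
  have hA₂ : A₂ ≠ 0 := ne_zero_of_natDegree_gt (n := 0) (by omega)
  exact transmission_ODE_unique_solvability_general m hA₁ hA₂ (by omega) h
end
end

section
/- Let P ∈ ℂ[t] be a polynomial of degree N ≥ 1 having no real roots. If u : ℝ → ℂ is a bounded N-times continuously differentiable function satisfying P(D_n)u = 0 on all of ℝ, then u = 0. -/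
noncomputable section
open Complex Filter Set

/-! The bounded solutions form a finite-dimensional translation-invariant space `V`. In finite
dimensions `V` is closed for pointwise convergence, so it contains the limits of difference
quotients: differentiation acts on `V`. If `V ≠ 0`, this operator has an eigenvector, that is, `V`
contains an exponential `x ↦ exp (m x)`. Boundedness forces `m = iτ` with `τ` real, and then
`P(D_n) exp (iτx) = P(τ) exp (iτx)` shows that `τ` is a real root of `P`. -/

section CauchyProblem

variable {E : Type*} {n : ℕ}

/-- The vector field `(y₀, …, yₙ₋₁) ↦ (y₁, …, yₙ₋₁, f y)` that turns the scalar equation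
`u⁽ⁿ⁾ = f(u, u', …, u⁽ⁿ⁻¹⁾)` into a first-order system. -/
def companionField (f : (Fin n → E) → E) (y : Fin n → E) : Fin n → E :=
  fun k ↦ if h : (k : ℕ) + 1 < n then y ⟨k + 1, h⟩ else f y

theorem lipschitzWith_companionField [PseudoMetricSpace E] {f : (Fin n → E) → E} {K : NNReal}
    (hf : LipschitzWith K f) : LipschitzWith (max K 1) (companionField f) := by
  refine .of_dist_le_mul fun y z ↦ (dist_pi_le_iff (by positivity)).2 fun k ↦ ?_
  by_cases hk : (k : ℕ) + 1 < n
  · simp only [companionField, dif_pos hk]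
    exact ((LipschitzWith.eval _).weaken (le_max_right K 1)).dist_le_mul y z
  · simp only [companionField, dif_neg hk]
    exact (hf.weaken (le_max_left K 1)).dist_le_mul y z

variable [NormedAddCommGroup E] [NormedSpace ℝ E]

/-- The Cauchy data `(u(x), u'(x), …, u⁽ⁿ⁻¹⁾(x))` at `x` of an ordinary differential equation of
order `n`. -/
def cauchyData (n : ℕ) (u : ℝ → E) (x : ℝ) : Fin n → E :=
  fun k ↦ iteratedDeriv k u x

theorem hasDerivAt_cauchyData {f : (Fin n → E) → E} {u : ℝ → E} (hu : ContDiff ℝ n u) {t : ℝ}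
    (hode : iteratedDeriv n u t = f (cauchyData n u t)) :
    HasDerivAt (cauchyData n u) (companionField f (cauchyData n u t)) t := by
  refine hasDerivAt_pi.2 fun k ↦ ?_
  have hcomp : companionField f (cauchyData n u t) k = iteratedDeriv (k + 1) u t := by
    by_cases hk : (k : ℕ) + 1 < n
    · simp only [companionField, cauchyData, dif_pos hk]
    · have hkn : (k : ℕ) + 1 = n := by lia
      rw [companionField, dif_neg hk, hkn, hode]
  rw [hcomp, iteratedDeriv_succ]
  exact (hu.differentiable_iteratedDeriv k (mod_cast k.2) t).hasDerivAt

theorem eq_of_cauchyData_eq {f : ℝ → (Fin n → E) → E} {K : NNReal} (hf : ∀ t, LipschitzWith K (f t))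
    {u v : ℝ → E} (hu : ContDiff ℝ n u) (hv : ContDiff ℝ n v)
    (hu_ode : ∀ t, iteratedDeriv n u t = f t (cauchyData n u t))
    (hv_ode : ∀ t, iteratedDeriv n v t = f t (cauchyData n v t))
    {t₀ : ℝ} (h₀ : cauchyData n u t₀ = cauchyData n v t₀) : u = v := by
  have hdata : cauchyData n u = cauchyData n v :=
    ODE_solution_unique_univ (v := fun t ↦ companionField (f t)) (s := fun _ ↦ univ)
      (fun t ↦ (lipschitzWith_companionField (hf t)).lipschitzOnWith)
      (fun t ↦ ⟨hasDerivAt_cauchyData hu (hu_ode t), mem_univ _⟩)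
      (fun t ↦ ⟨hasDerivAt_cauchyData hv (hv_ode t), mem_univ _⟩) h₀
  funext t
  rcases n.eq_zero_or_pos with rfl | hn
  · have huv : iteratedDeriv 0 u t = iteratedDeriv 0 v t := by rw [hu_ode, hv_ode, hdata]
    simpa only [iteratedDeriv_zero] using huv
  · simpa only [cauchyData, iteratedDeriv_zero] using congrFun (congrFun hdata t) ⟨0, hn⟩

end CauchyProblem

section TranslationInvariant

theorem deriv_mem_of_isClosed_of_translation_mem {𝕜 F : Type*} [NontriviallyNormedField 𝕜]
    [NormedAddCommGroup F] [NormedSpace 𝕜 F] {V : Submodule 𝕜 (𝕜 → F)}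
    (hclosed : IsClosed (V : Set (𝕜 → F))) (htrans : ∀ v ∈ V, ∀ s, (fun x ↦ v (x + s)) ∈ V)
    {u : 𝕜 → F} (hu : u ∈ V) (hdiff : Differentiable 𝕜 u) : deriv u ∈ V := by
  have hslope : Tendsto (fun t : 𝕜 ↦ t⁻¹ • ((fun x ↦ u (x + t)) - u)) (nhdsWithin 0 {0}ᶜ)
      (nhds (deriv u)) :=
    tendsto_pi_nhds.2 fun x ↦ (hdiff x).hasDerivAt.tendsto_slope_zero
  exact hclosed.mem_of_tendsto hslope <| .of_forall fun t ↦
    V.smul_mem _ (V.sub_mem (htrans u hu t) hu)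

theorem exists_deriv_eq_smul {E : Type*} [NormedAddCommGroup E] [NormedSpace ℂ E]
    {V : Submodule ℂ (ℝ → E)} [FiniteDimensional ℂ V] (hV : V ≠ ⊥)
    (hdiff : ∀ v ∈ V, Differentiable ℝ v) (hderiv : ∀ v ∈ V, deriv v ∈ V) :
    ∃ m : ℂ, ∃ v ∈ V, v ≠ 0 ∧ deriv v = m • v := by
  let D : Module.End ℂ V :=
    { toFun := fun v ↦ ⟨deriv v, hderiv v v.2⟩
      map_add' := fun v w ↦ Subtype.ext <| funext fun x ↦
        deriv_add (hdiff v v.2 x) (hdiff w w.2 x)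
      map_smul' := fun c v ↦ Subtype.ext <| funext fun x ↦ deriv_const_smul c (hdiff v v.2 x) }
  have : Nontrivial V := Submodule.nontrivial_iff_ne_bot.2 hV
  obtain ⟨m, hm⟩ := D.exists_eigenvalue
  obtain ⟨v, hv⟩ := hm.exists_hasEigenvector
  exact ⟨m, v, v.2, fun h ↦ hv.2 (Subtype.ext h), congrArg Subtype.val hv.apply_eq_smul⟩

theorem hasDerivAt_cexp_mul_ofReal (m : ℂ) (x : ℝ) :
    HasDerivAt (fun x : ℝ ↦ exp (m * x)) (m * exp (m * x)) x := by
  simpa [mul_comm] using ((ofRealCLM.hasDerivAt (x := x)).const_mul m).cexp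

theorem eq_cexp_smul_of_deriv_eq_smul {E : Type*} [NormedAddCommGroup E] [NormedSpace ℂ E]
    {u : ℝ → E} (hdiff : Differentiable ℝ u) {m : ℂ} (hm : deriv u = m • u) (x : ℝ) :
    u x = exp (m * x) • u 0 := by
  have hconst (y : ℝ) : HasDerivAt (fun y : ℝ ↦ exp (-m * y) • u y) 0 y := by
    have hu : HasDerivAt u (m • u y) y := by simpa [hm] using (hdiff y).hasDerivAt
    refine ((hasDerivAt_cexp_mul_ofReal (-m) y).smul hu).congr_deriv ?_
    module
  have h0 : exp (-m * x) • u x = u 0 := by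
    simpa using is_const_of_deriv_eq_zero (fun y ↦ (hconst y).differentiableAt)
      (fun y ↦ (hconst y).deriv) x 0
  rw [← h0, smul_smul, ← exp_add, neg_mul, add_neg_cancel, exp_zero, one_smul]

theorem exists_cexp_mem_of_finiteDimensional {V : Submodule ℂ (ℝ → ℂ)} [FiniteDimensional ℂ V]
    (hV : V ≠ ⊥) (hdiff : ∀ v ∈ V, Differentiable ℝ v)
    (htrans : ∀ v ∈ V, ∀ s, (fun x ↦ v (x + s)) ∈ V) :
    ∃ m : ℂ, (fun x : ℝ ↦ exp (m * x)) ∈ V := by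
  have hclosed : IsClosed (V.restrictScalars ℝ : Set (ℝ → ℂ)) := V.closed_of_finiteDimensional
  obtain ⟨m, v, hvV, hv, hm⟩ := exists_deriv_eq_smul hV hdiff fun v hv ↦
    deriv_mem_of_isClosed_of_translation_mem hclosed htrans hv (hdiff v hv)
  have hexp : v = v 0 • fun x : ℝ ↦ exp (m * x) := funext fun x ↦
    (eq_cexp_smul_of_deriv_eq_smul (hdiff v hvV) hm x).trans (mul_comm _ _)
  have hv0 : v 0 ≠ 0 := fun h ↦ hv (by rw [hexp, h, zero_smul])
  exact ⟨m, (V.smul_mem_iff hv0).1 (hexp ▸ hvV)⟩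

theorem re_eq_zero_of_norm_cexp_le {m : ℂ} {C : ℝ} (h : ∀ x : ℝ, ‖exp (m * x)‖ ≤ C) :
    m.re = 0 := by
  by_contra hre
  have hC : Real.exp C ≤ C := by
    simpa [norm_exp, mul_div_cancel₀ _ hre] using h (C / m.re)
  linarith [Real.add_one_le_exp C]

end TranslationInvariant

section SolutionSpace

variable (P : Polynomial ℂ)

theorem polyOp_add {u v : ℝ → ℂ} (hu : ContDiff ℝ P.natDegree u) (hv : ContDiff ℝ P.natDegree v)
    (x : ℝ) : polyOp P (u + v) x = polyOp P u x + polyOp P v x := by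
  simp only [polyOp, ← Finset.sum_add_distrib]
  refine Finset.sum_congr rfl fun k hk ↦ ?_
  have hle : (k : WithTop ℕ∞) ≤ P.natDegree := mod_cast Finset.mem_range_succ_iff.1 hk
  rw [iteratedDeriv_add (hu.of_le hle).contDiffAt (hv.of_le hle).contDiffAt]
  ring

theorem polyOp_const_smul (c : ℂ) (u : ℝ → ℂ) (x : ℝ) :
    polyOp P (c • u) x = c * polyOp P u x := by
  simp only [polyOp, Finset.mul_sum, iteratedDeriv_const_smul_field, smul_eq_mul]
  exact Finset.sum_congr rfl fun k _ ↦ by ring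

theorem polyOp_comp_add_const (u : ℝ → ℂ) (s x : ℝ) :
    polyOp P (fun y ↦ u (y + s)) x = polyOp P u (x + s) := by
  simp only [polyOp, iteratedDeriv_comp_add_const]

theorem iteratedDeriv_cexp_mul_ofReal (k : ℕ) (m : ℂ) :
    iteratedDeriv k (fun x : ℝ ↦ exp (m * x)) = fun x : ℝ ↦ m ^ k * exp (m * x) := by
  induction k with
  | zero => simp
  | succ k ih =>
    funext x
    rw [iteratedDeriv_succ, ih, ((hasDerivAt_cexp_mul_ofReal m x).const_mul _).deriv]
    ring

theorem polyOp_cexp (m : ℂ) (x : ℝ) :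
    polyOp P (fun x : ℝ ↦ exp (m * x)) x = P.eval (-I * m) * exp (m * x) := by
  simp only [polyOp, iteratedDeriv_cexp_mul_ofReal, Polynomial.eval_eq_sum_range, Finset.sum_mul,
    mul_pow, mul_assoc]

/-- The space of classical solutions of `P(D_n)u = 0`, i.e. of those that are continuously
differentiable up to the order `P.natDegree`. -/
def solutionSpace : Submodule ℂ (ℝ → ℂ) where
  carrier := {u | ContDiff ℝ P.natDegree u ∧ ∀ x, polyOp P u x = 0}
  zero_mem' := ⟨contDiff_const, fun x ↦ by simpa using polyOp_const_smul P 0 0 x⟩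
  add_mem' := fun ⟨hu, hu0⟩ ⟨hv, hv0⟩ ↦
    ⟨hu.add hv, fun x ↦ by rw [polyOp_add P hu hv, hu0, hv0, add_zero]⟩
  smul_mem' := fun c _ ⟨hu, hu0⟩ ↦
    ⟨hu.const_smul c, fun x ↦ by rw [polyOp_const_smul, hu0, mul_zero]⟩

variable {P}

theorem comp_add_const_mem_solutionSpace {u : ℝ → ℂ} (hu : u ∈ solutionSpace P) (s : ℝ) :
    (fun x ↦ u (x + s)) ∈ solutionSpace P :=
  ⟨hu.1.comp (contDiff_id.add contDiff_const), fun x ↦ by rw [polyOp_comp_add_const, hu.2]⟩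

theorem eval_eq_zero_of_cexp_mem_solutionSpace {m : ℂ}
    (hm : (fun x : ℝ ↦ exp (m * x)) ∈ solutionSpace P) : P.eval (-I * m) = 0 := by
  simpa [polyOp_cexp] using hm.2 0

variable (P) in
/-- The functional `f` for which `P(D_n)u = 0` takes the form `u⁽ᴺ⁾ = f(u, u', …, u⁽ᴺ⁻¹⁾)`, where
`N = P.natDegree`; it is meaningful only for `P ≠ 0`. -/
def normalForm : (Fin P.natDegree → ℂ) →L[ℂ] ℂ :=
  -(P.leadingCoeff * (-I) ^ P.natDegree)⁻¹ •
    ∑ k : Fin P.natDegree, (P.coeff k * (-I) ^ (k : ℕ)) • ContinuousLinearMap.proj k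

theorem iteratedDeriv_natDegree_eq_normalForm (hP : P ≠ 0) {u : ℝ → ℂ} {x : ℝ}
    (hu : polyOp P u x = 0) :
    iteratedDeriv P.natDegree u x = normalForm P (cauchyData P.natDegree u x) := by
  have hlead : P.leadingCoeff ≠ 0 := Polynomial.leadingCoeff_ne_zero.2 hP
  have hI : (-I) ^ P.natDegree ≠ 0 := pow_ne_zero _ (neg_ne_zero.2 I_ne_zero)
  rw [polyOp, Finset.sum_range_succ, Finset.sum_range, Polynomial.coeff_natDegree, ← mul_assoc,
    add_eq_zero_iff_eq_neg'] at hu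
  rw [← mul_right_inj' (mul_ne_zero hlead hI), hu]
  simp [normalForm, cauchyData, mul_assoc, mul_inv_cancel_left₀ hlead, hI]

theorem finiteDimensional_solutionSpace (hP : P ≠ 0) : FiniteDimensional ℂ (solutionSpace P) := by
  let T : solutionSpace P →ₗ[ℂ] (Fin P.natDegree → ℂ) :=
    { toFun := fun u ↦ cauchyData P.natDegree u 0
      map_add' := fun u v ↦ funext fun k ↦
        have hle : ((k : ℕ) : WithTop ℕ∞) ≤ P.natDegree := mod_cast k.2.le
        iteratedDeriv_add (u.2.1.of_le hle).contDiffAt (v.2.1.of_le hle).contDiffAt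
      map_smul' := fun c u ↦ funext fun _ ↦ iteratedDeriv_const_smul_field c u.1 }
  refine .of_injective T fun u v huv ↦ Subtype.ext ?_
  exact eq_of_cauchyData_eq (fun _ ↦ (normalForm P).lipschitz) u.2.1 v.2.1
    (fun t ↦ iteratedDeriv_natDegree_eq_normalForm hP (u.2.2 t))
    (fun t ↦ iteratedDeriv_natDegree_eq_normalForm hP (v.2.2 t)) huv

end SolutionSpace

/-- If `P` is a polynomial of degree `N ≥ 1` without real roots and `u : ℝ → ℂ`
is a bounded `N`-times continuously differentiable function with `P(D_n)u = 0` on all of `ℝ`,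
then `u = 0`. -/
theorem bounded_solution_of_ODE_without_real_roots_is_zero
    (N : ℕ) (hN : 1 ≤ N) (P : Polynomial ℂ) (hdeg : P.natDegree = N)
    (hnoreal : ∀ x : ℝ, P.eval (x : ℂ) ≠ 0)
    (u : ℝ → ℂ) (hreg : ContDiff ℝ N u)
    (hbdd : ∃ C : ℝ, ∀ x : ℝ, ‖u x‖ ≤ C)
    (hode : ∀ x : ℝ, polyOp P u x = 0) :
    u = 0 := by
  subst hdeg
  by_contra hne
  let V : Submodule ℂ (ℝ → ℂ) := solutionSpace P ⊓ boundedFilterSubmodule ℂ ⊤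
  have hV : V ≠ ⊥ :=
    (Submodule.ne_bot_iff V).2
      ⟨u, ⟨⟨hreg, hode⟩, Asymptotics.isBigO_top.2 (by simpa using hbdd)⟩, hne⟩
  have hP : P ≠ 0 := fun h ↦ hnoreal 0 (by rw [h, Polynomial.eval_zero])
  have := finiteDimensional_solutionSpace hP
  obtain ⟨m, hm_sol, hm_bdd⟩ := exists_cexp_mem_of_finiteDimensional hV
    (fun v hv ↦ hv.1.1.differentiable (mod_cast Nat.one_le_iff_ne_zero.1 hN))
    fun v hv s ↦ ⟨comp_add_const_mem_solutionSpace hv.1 s, hv.2.comp_tendsto tendsto_top⟩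
  obtain ⟨C, hC⟩ := Asymptotics.isBigO_top.1 hm_bdd
  have hre : m.re = 0 := re_eq_zero_of_norm_cexp_le fun x ↦ by simpa using hC x
  have hm : -I * m = m.im := by apply Complex.ext <;> simp [hre]
  exact hnoreal m.im (hm ▸ eval_eq_zero_of_cexp_mem_solutionSpace hm_sol)
end
end

section
/- Let n ≥ 2, m ≥ 1, θ ∈ [0,π), and let A₁ be a properly elliptic homogeneous symbol of order 2m and A₂ a properly parameter-elliptic symbol of order 2m on Σ̄. Fix ξ' ∈ ℝ^{n−1} \ {0} and q ∈ Σ̄. Then there exists exactly one family of smooth functions ω_{ik} : [0,∞) → ℂ (i = 1,2; k = 1,…,2m) such that A₁(ξ',D_n)ω_{1k} = 0 and A₂(ξ',D_n,q)ω_{2k} = 0 on (0,∞) for every k, the transmission conditions D_n^{j−1}(ω_{1k} + (−1)^j ω_{2k})(0) = δ_{jk} hold for all j,k = 1,…,2m, and ω_{1k}(x_n) → 0, ω_{2k}(x_n) → 0 as x_n → ∞. (This is the fundamental solution of the transmission model problem.) -/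
noncomputable section
open Complex Filter Set

/-- The closed sector `Σ̄ = {q ∈ ℂ : |arg q| ≤ θ/(2m)}` (which contains `0`). -/
def sector (m : ℕ) (θ : ℝ) : Set ℂ := {q : ℂ | |q.arg| ≤ θ / (2 * m)}

/-- The polynomial `t ↦ A₁(ξ', t)` in the last (co-normal) variable, the first `n-1`
variables of the symbol `A₁` being evaluated at `ξ'`. -/
def polA1 (n : ℕ) (A : MvPolynomial (Fin n) ℂ) (ξ : EuclideanSpace ℝ (Fin (n - 1))) :
    Polynomial ℂ :=
  MvPolynomial.aeval (fun i : Fin n =>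
    if h : (i : ℕ) < n - 1 then Polynomial.C ((ξ ⟨i, h⟩ : ℝ) : ℂ) else Polynomial.X) A

/-- The polynomial `t ↦ A₂(ξ', t, q)`: in the symbol `A₂`, the variables `0,…,n-2` are
evaluated at `ξ'`, the variable `n-1` (the co-normal variable `ξ_n`) becomes the
indeterminate, and the last variable (the parameter) is evaluated at `q`. -/
def polA2 (n : ℕ) (A : MvPolynomial (Fin (n + 1)) ℂ) (ξ : EuclideanSpace ℝ (Fin (n - 1)))
    (q : ℂ) : Polynomial ℂ :=
  MvPolynomial.aeval (fun i : Fin (n + 1) =>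
    if h : (i : ℕ) < n - 1 then Polynomial.C ((ξ ⟨i, h⟩ : ℝ) : ℂ)
    else if (i : ℕ) = n - 1 then Polynomial.X else Polynomial.C q) A

/-- Solution predicate for the fundamental solution of the (reflected) transmission model
problem at frequency `ξ'` and parameter `q`: for each column `k`, the row `ω 0 k` solves
the elliptic ODE, `ω 1 k` solves the parameter-elliptic ODE, the transmission conditions
`D_n^{j-1}(ω_{1k} + (-1)^j ω_{2k})(0) = δ_{jk}` hold, and both decay at `∞`. -/
def FundSol (n m : ℕ) (A₁ : MvPolynomial (Fin n) ℂ) (A₂ : MvPolynomial (Fin (n + 1)) ℂ)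
    (ξ : EuclideanSpace ℝ (Fin (n - 1))) (q : ℂ) (ω : Fin 2 → Fin (2 * m) → ℝ → ℂ) : Prop :=
  (∀ i k, ContDiff ℝ (⊤ : ℕ∞) (ω i k)) ∧
  (∀ k, ∀ x : ℝ, 0 < x → polyOp (polA1 n A₁ ξ) (ω 0 k) x = 0) ∧
  (∀ k, ∀ x : ℝ, 0 < x → polyOp (polA2 n A₂ ξ q) (ω 1 k) x = 0) ∧
  (∀ j k : Fin (2 * m),
    (-Complex.I) ^ (j : ℕ) * iteratedDeriv (j : ℕ) (ω 0 k) 0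
      + (-1 : ℂ) ^ ((j : ℕ) + 1) * ((-Complex.I) ^ (j : ℕ) * iteratedDeriv (j : ℕ) (ω 1 k) 0)
      = if j = k then 1 else 0) ∧
  (∀ i k, Tendsto (ω i k) atTop (nhds 0))

/-!
Write `P₊` for the monic factor of a polynomial `P` collecting its roots in the open upper
half-plane. The solutions of `P(D_n) u = 0` that decay at `+∞` are exactly the solutions of
`P₊(D_n) u = 0`, and these extend to the whole line. Let `u` and `v` be solutions for the factors
`P₊` and `Q₊` coming from the two symbols. Then `w(x) = u(x) - v(-x)` is a solution for
`P₊(t) Q₊(-t)`, whose degree is `2m`, and the transmission conditions say precisely that `w` has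
prescribed Cauchy data at `0`. The roots of `P₊(t)` and of `Q₊(-t)` lie in opposite half-planes, so
these factors are coprime and `w` determines both `u` and `v`. The transmission problem is therefore
a Cauchy problem of order `2m` with `2m` data.
-/

section Algebra

open Polynomial

theorem semiconjBy_aeval {R A : Type*} [CommSemiring R] [Semiring A] [Algebra R A] {a x y : A}
    (h : SemiconjBy a x y) (P : R[X]) : SemiconjBy a (aeval x P) (aeval y P) := by
  induction P using Polynomial.induction_on' with
  | add P Q hP hQ => simpa only [map_add] using hP.add_right hQ
  | monomial k c =>
    simp only [aeval_monomial]
    exact SemiconjBy.mul_right (Algebra.commutes c a).symm (h.pow_right k)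

theorem polynomial_induction_on_roots {K : Type*} [Field K] [IsAlgClosed K]
    {motive : (P : K[X]) → P ≠ 0 → Prop}
    (C : ∀ (c : K) (hc : c ≠ 0), motive (C c) (C_ne_zero.2 hc))
    (mul_X_sub_C : ∀ (P : K[X]) (a : K) (hP : P ≠ 0), motive P hP →
      motive (P * (X - .C a)) (mul_ne_zero hP (X_sub_C_ne_zero a)))
    {P : K[X]} (hP : P ≠ 0) : motive P hP := by
  have h (s : Multiset K) :
      ∃ h0, motive (.C P.leadingCoeff * (s.map fun a => X - .C a).prod) h0 := by
    induction s using Multiset.induction_on with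
    | empty => simpa using ⟨hP, C _ (leadingCoeff_ne_zero.2 hP)⟩
    | cons a s ih =>
      obtain ⟨h0, hs⟩ := ih
      rw [Multiset.map_cons, Multiset.prod_cons, mul_comm (X - _), ← mul_assoc]
      exact ⟨_, mul_X_sub_C _ a h0 hs⟩
  obtain ⟨_, hroots⟩ := h P.roots
  simpa only [← (IsAlgClosed.splits P).eq_prod_roots] using hroots

theorem isCoprime_of_forall_isRoot_not_isRoot {K : Type*} [Field K] [IsAlgClosed K] {P Q : K[X]}
    (h : ∀ a, P.IsRoot a → ¬ Q.IsRoot a) : IsCoprime P Q := by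
  rw [isCoprime_iff_aeval_ne_zero_of_isAlgClosed K K]
  exact fun a => or_iff_not_imp_left.2 fun ha => by simpa using h a (by simpa using ha)

theorem ne_zero_of_card_filter_roots_pos {R : Type*} [CommRing R] [IsDomain R] {P : R[X]}
    {p : R → Prop} [DecidablePred p] (h : 0 < (P.roots.filter p).card) : P ≠ 0 := by
  rintro rfl
  simp at h

/-- The monic factor `P₊` of `P` collecting the roots in the open upper half-plane. -/
def upperFactor (P : ℂ[X]) : ℂ[X] :=
  ((P.roots.filter fun z => 0 < z.im).map fun a => X - C a).prod

theorem upperFactor_ne_zero (P : ℂ[X]) : upperFactor P ≠ 0 :=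
  (monic_multisetProd_X_sub_C _).ne_zero

theorem natDegree_upperFactor (P : ℂ[X]) :
    (upperFactor P).natDegree = (P.roots.filter fun z => 0 < z.im).card :=
  natDegree_multiset_prod_X_sub_C_eq_card _

theorem im_pos_of_isRoot_upperFactor {P : ℂ[X]} {a : ℂ} (ha : (upperFactor P).IsRoot a) :
    0 < a.im := by
  rw [← mem_roots (upperFactor_ne_zero P), upperFactor, roots_multiset_prod_X_sub_C] at ha
  exact (Multiset.mem_filter.1 ha).2

theorem not_isRoot_neg_upperFactor {P Q : ℂ[X]} (a : ℂ) (ha : (upperFactor P).IsRoot a) :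
    ¬ (upperFactor Q).IsRoot (-a) := fun hb => by
  have := neg_im a ▸ im_pos_of_isRoot_upperFactor hb
  linarith [im_pos_of_isRoot_upperFactor ha]

theorem upperFactor_dvd (P : ℂ[X]) : upperFactor P ∣ P :=
  (Multiset.prod_dvd_prod_of_le (Multiset.map_le_map (Multiset.filter_le _ _))).trans
    P.prod_multiset_X_sub_C_dvd

theorem exists_eq_upperFactor_mul {P : ℂ[X]} (hP : P ≠ 0) :
    ∃ Q, Q ≠ 0 ∧ P = upperFactor P * Q ∧ ∀ a, Q.IsRoot a → a.im ≤ 0 := by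
  set s := P.roots.filter fun z => ¬ 0 < z.im
  have hs := (monic_multisetProd_X_sub_C s).ne_zero
  have hc : P.leadingCoeff ≠ 0 := leadingCoeff_ne_zero.2 hP
  have hQ : C P.leadingCoeff * (s.map fun a => X - C a).prod ≠ 0 := by simp [hP, hs]
  refine ⟨_, hQ, ?_, fun a ha => ?_⟩
  · rw [mul_left_comm, upperFactor, ← Multiset.prod_add, ← Multiset.map_add,
      Multiset.filter_add_not]
    exact (IsAlgClosed.splits P).eq_prod_roots
  · rw [← mem_roots hQ, roots_C_mul _ hc, roots_multiset_prod_X_sub_C] at ha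
    exact not_lt.1 (Multiset.mem_filter.1 ha).2

end Algebra

/-- The space of smooth functions `ℝ → ℂ`, as a complex subspace of all functions. -/
def smoothSubmodule : Submodule ℂ (ℝ → ℂ) where
  carrier := {u | ContDiff ℝ (⊤ : ℕ∞) u}
  add_mem' {u v} (hu : ContDiff ℝ (⊤ : ℕ∞) u) (hv : ContDiff ℝ (⊤ : ℕ∞) v) := hu.add hv
  zero_mem' := (contDiff_const : ContDiff ℝ (⊤ : ℕ∞) fun _ : ℝ => (0 : ℂ))
  smul_mem' c u (hu : ContDiff ℝ (⊤ : ℕ∞) u) := hu.const_smul c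

/-- The type of smooth functions `ℝ → ℂ`, the module on which polynomials in `D_n` act. -/
abbrev SmoothFun : Type := smoothSubmodule

namespace SmoothFun

open Polynomial Topology

instance : CoeFun SmoothFun fun _ => ℝ → ℂ := ⟨Subtype.val⟩

theorem contDiff (u : SmoothFun) : ContDiff ℝ (⊤ : ℕ∞) u := u.2

theorem continuous (u : SmoothFun) : Continuous u := u.contDiff.continuous

theorem differentiable (u : SmoothFun) : Differentiable ℝ u := u.contDiff.differentiable (by simp)

/-- The operator `D_n = -i d/dx` on smooth functions. -/
def D : Module.End ℂ SmoothFun where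
  toFun u := ⟨fun x => -I * deriv u x,
    contDiff_const.mul (contDiff_infty_iff_deriv.1 u.contDiff).2⟩
  map_add' u v := by
    ext x
    simp [deriv_add (u.differentiable x) (v.differentiable x), mul_add]
  map_smul' c u := by
    ext x
    simp [deriv_const_smul c (u.differentiable x), mul_left_comm]

theorem D_apply (u : SmoothFun) (x : ℝ) : D u x = -I * deriv u x := rfl

theorem hasDerivAt (u : SmoothFun) (x : ℝ) : HasDerivAt u (I * D u x) x := by
  simpa [D_apply, ← mul_assoc] using (u.differentiable x).hasDerivAt

theorem D_apply_of_hasDerivAt {u : SmoothFun} {d : ℂ} {x : ℝ} (h : HasDerivAt u (I * d) x) :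
    D u x = d := by
  simp [D_apply, h.deriv, ← mul_assoc]

theorem D_pow_apply (k : ℕ) (u : SmoothFun) (x : ℝ) :
    (D ^ k) u x = (-I) ^ k * iteratedDeriv k u x := by
  induction k generalizing x with
  | zero => simp
  | succ k ih =>
    rw [pow_succ', Module.End.mul_apply, D_apply, funext ih, deriv_const_mul_field,
      iteratedDeriv_succ, pow_succ', mul_assoc]

theorem polyOp_eq_aeval_D (P : ℂ[X]) (u : SmoothFun) (x : ℝ) :
    polyOp P u x = aeval D P u x := by
  simp [polyOp, aeval_eq_sum_range, LinearMap.sum_apply, D_pow_apply, Finset.sum_apply]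

theorem eqOn_D {S : Set ℝ} (hS : UniqueDiffOn ℝ S) {u v : SmoothFun} (h : EqOn u v S) :
    EqOn (D u) (D v) S := fun x hx => by
  rw [D_apply, D_apply, ← (u.differentiable x).derivWithin (hS x hx),
    ← (v.differentiable x).derivWithin (hS x hx), derivWithin_congr h (h hx)]

theorem eqOn_D_pow {S : Set ℝ} (hS : UniqueDiffOn ℝ S) {u v : SmoothFun} (h : EqOn u v S)
    (k : ℕ) : EqOn ((D ^ k) u) ((D ^ k) v) S := by
  induction k with
  | zero => simpa using h
  | succ k ih => simpa only [pow_succ', Module.End.mul_apply] using eqOn_D hS ih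

theorem aeval_D_mul_X_sub_C (P : ℂ[X]) (a : ℂ) (u : SmoothFun) :
    aeval D (P * (X - C a)) u = aeval D P (D u - a • u) := by
  simp [Module.End.mul_apply, Module.algebraMap_end_apply]

/-- Translation `u ↦ u(· + h)`. -/
def translate (h : ℝ) : Module.End ℂ SmoothFun where
  toFun u := ⟨fun x => u (x + h), u.contDiff.comp (contDiff_id.add contDiff_const)⟩
  map_add' _ _ := rfl
  map_smul' _ _ := rfl

theorem translate_apply (h : ℝ) (u : SmoothFun) (x : ℝ) : translate h u x = u (x + h) := rfl

theorem commute_translate_D (h : ℝ) : Commute (translate h) D := by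
  ext u x
  exact (D_apply_of_hasDerivAt ((u.hasDerivAt (x + h)).comp_add_const x h)).symm

/-- Reflection `u ↦ u(-·)`. -/
def reflect : Module.End ℂ SmoothFun where
  toFun u := ⟨fun x => u (-x), u.contDiff.comp contDiff_neg⟩
  map_add' _ _ := rfl
  map_smul' _ _ := rfl

theorem reflect_apply (u : SmoothFun) (x : ℝ) : reflect u x = u (-x) := rfl

theorem reflect_reflect (u : SmoothFun) : reflect (reflect u) = u := by
  ext x
  simp [reflect_apply]

theorem reflect_injective : Function.Injective reflect :=
  Function.LeftInverse.injective reflect_reflect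

theorem semiconjBy_reflect_D : SemiconjBy reflect D (-D) := by
  ext u x
  have h : HasDerivAt (reflect u) (I * -D u (-x)) x := by
    refine ((u.hasDerivAt (-x)).scomp x (hasDerivAt_neg x)).congr_deriv ?_
    simp
  simp [reflect_apply, D_apply_of_hasDerivAt h]

theorem aeval_D_comp_neg_X_reflect (P : ℂ[X]) (u : SmoothFun) :
    aeval D (P.comp (-X)) (reflect u) = reflect (aeval D P u) := by
  rw [aeval_comp, map_neg, aeval_X]
  exact (LinearMap.congr_fun (semiconjBy_aeval semiconjBy_reflect_D P) u).symm

theorem D_pow_reflect_apply (k : ℕ) (u : SmoothFun) (x : ℝ) :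
    (D ^ k) (reflect u) x = (-1) ^ k * (D ^ k) u (-x) := by
  have h : iteratedDeriv k (reflect u) x = (-1 : ℝ) ^ k • iteratedDeriv k u (-x) :=
    iteratedDeriv_comp_neg k u x
  simp [D_pow_apply, h, mul_left_comm]

/-- Modulation `u ↦ e^{ib·} u`, which conjugates `D_n` to `D_n + b`. -/
def modulate (b : ℂ) : Module.End ℂ SmoothFun where
  toFun u := ⟨fun x => exp (I * b * x) * u x,
    (contDiff_const.mul ofRealCLM.contDiff).cexp.mul u.contDiff⟩
  map_add' u v := by ext; simp [mul_add]
  map_smul' c u := by ext; simp [mul_left_comm]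

theorem modulate_apply (b : ℂ) (u : SmoothFun) (x : ℝ) :
    modulate b u x = exp (I * b * x) * u x := rfl

theorem modulate_modulate (b c : ℂ) (u : SmoothFun) :
    modulate b (modulate c u) = modulate (b + c) u := by
  ext x
  simp [modulate_apply, ← mul_assoc, ← Complex.exp_add, mul_add, add_mul]

theorem modulate_zero (u : SmoothFun) : modulate 0 u = u := by
  ext x
  simp [modulate_apply]

theorem norm_modulate_apply (b : ℂ) (u : SmoothFun) (x : ℝ) :
    ‖modulate b u x‖ = Real.exp (-b.im * x) * ‖u x‖ := by
  simp [modulate_apply, Complex.norm_exp]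

theorem D_modulate (b : ℂ) (u : SmoothFun) : D (modulate b u) = modulate b (D u + b • u) := by
  ext x
  have he : HasDerivAt (fun x : ℝ => exp (I * b * x)) (exp (I * b * x) * (I * b * 1)) x :=
    (ofRealCLM.hasDerivAt.const_mul (I * b)).cexp
  refine D_apply_of_hasDerivAt ((he.mul (u.hasDerivAt x)).congr_deriv ?_)
  simp only [mul_one, map_add, map_smul, Submodule.coe_add, SetLike.val_smul, Pi.add_apply,
    modulate_apply, Pi.smul_apply, smul_eq_mul]
  ring

theorem exists_D_eq (f : SmoothFun) (c : ℂ) : ∃ u, D u = f ∧ u 0 = c := by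
  have hf : Continuous fun x => I * f x := f.continuous.const_mul I
  set F : ℝ → ℂ := fun x => c + ∫ t in (0 : ℝ)..x, I * f t
  have hF (x : ℝ) : HasDerivAt F (I * f x) x :=
    (hf.integral_hasStrictDerivAt 0 x).hasDerivAt.const_add c
  have hF' : ContDiff ℝ (⊤ : ℕ∞) F := by
    rw [contDiff_infty_iff_deriv, funext fun x => (hF x).deriv]
    exact ⟨fun x => (hF x).differentiableAt, contDiff_const.mul f.contDiff⟩
  exact ⟨⟨F, hF'⟩, by ext x; exact D_apply_of_hasDerivAt (hF x), by simp [F]⟩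

theorem exists_D_sub_smul_eq (a : ℂ) (f : SmoothFun) (c : ℂ) :
    ∃ u, D u - a • u = f ∧ u 0 = c := by
  obtain ⟨v, hv, hv0⟩ := exists_D_eq (modulate (-a) f) c
  refine ⟨modulate a v, ?_, by simp [modulate_apply, hv0]⟩
  rw [D_modulate, map_add, map_smul, add_sub_cancel_right, hv, modulate_modulate,
    add_neg_cancel, modulate_zero]

theorem D_modulate_neg (a : ℂ) (u : SmoothFun) :
    D (modulate (-a) u) = modulate (-a) (D u - a • u) := by
  rw [D_modulate, sub_eq_add_neg]
  exact congrArg _ (congrArg _ (neg_smul a u))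

theorem eqOn_exp_of_D_sub_smul_eqOn_zero {a : ℂ} {u : SmoothFun} {S : Set ℝ} (hS : Convex ℝ S)
    (h0 : (0 : ℝ) ∈ S) (h : EqOn (D u - a • u : SmoothFun) 0 S) :
    EqOn u (fun x => exp (I * a * x) * u 0) S := by
  intro x hx
  have hv (y : ℝ) (hy : y ∈ S) : HasDerivWithinAt (modulate (-a) u) 0 S y := by
    have := (modulate (-a) u).hasDerivAt y
    rw [D_modulate_neg, modulate_apply, h hy] at this
    simpa using this.hasDerivWithinAt
  have hconst : modulate (-a) u x = u 0 := by
    have := hS.norm_image_sub_le_of_norm_hasDerivWithin_le (C := 0) hv (by simp) h0 hx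
    simpa [sub_eq_zero, modulate_apply] using this
  simp [← hconst, modulate_apply, ← mul_assoc, ← Complex.exp_add]

theorem exists_aeval_D_eq_zero {P : ℂ[X]} (hP : P ≠ 0) (c : ℕ → ℂ) :
    ∃ u, aeval D P u = 0 ∧ ∀ j < P.natDegree, (D ^ j) u 0 = c j := by
  induction hP using polynomial_induction_on_roots generalizing c with
  | C b _ => exact ⟨0, by simp, by simp⟩
  | mul_X_sub_C P a hP ih =>
    obtain ⟨v, hv, hvc⟩ := ih fun j => c (j + 1) - a * c j
    obtain ⟨u, rfl, hu⟩ := exists_D_sub_smul_eq a v (c 0)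
    refine ⟨u, by rw [aeval_D_mul_X_sub_C, hv], fun j hj => ?_⟩
    rw [natDegree_mul hP (X_sub_C_ne_zero a), natDegree_X_sub_C] at hj
    induction j with
    | zero => simpa using hu
    | succ j ihj =>
      have := hvc j (by omega)
      simpa [ihj (by omega), ← Module.End.mul_apply, ← pow_succ] using this

theorem eqOn_zero_of_aeval_D_eqOn_zero {P : ℂ[X]} (hP : P ≠ 0) {u : SmoothFun} {S : Set ℝ}
    (hS : Convex ℝ S) (h0 : (0 : ℝ) ∈ S) (h : EqOn (aeval D P u) 0 S)
    (hd : ∀ j < P.natDegree, (D ^ j) u 0 = 0) : EqOn u 0 S := by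
  induction hP using polynomial_induction_on_roots generalizing u with
  | C b hb => simpa [EqOn, hb, Module.algebraMap_end_apply] using h
  | mul_X_sub_C P a hP ih =>
    rw [natDegree_mul hP (X_sub_C_ne_zero a), natDegree_X_sub_C] at hd
    have hv : EqOn (D u - a • u : SmoothFun) 0 S := by
      refine ih (by rwa [aeval_D_mul_X_sub_C] at h) fun j hj => ?_
      have := hd (j + 1) (by omega)
      rw [pow_succ, Module.End.mul_apply] at this
      simp [this, hd j (by omega)]
    have hu0 : u 0 = 0 := by simpa using hd 0 (by omega)
    exact fun x hx => by simpa [hu0] using eqOn_exp_of_D_sub_smul_eqOn_zero hS h0 hv hx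

theorem eq_zero_of_aeval_D_eq_zero {P : ℂ[X]} (hP : P ≠ 0) {u : SmoothFun}
    (h : aeval D P u = 0) (hd : ∀ j < P.natDegree, (D ^ j) u 0 = 0) : u = 0 := by
  have := eqOn_zero_of_aeval_D_eqOn_zero hP convex_univ (mem_univ 0) (by simp [h, EqOn]) hd
  exact Subtype.ext (eqOn_univ _ _ |>.1 this)

theorem exists_aeval_D_eq_zero_eqOn {P : ℂ[X]} (hP : P ≠ 0) {w : SmoothFun} {S : Set ℝ}
    (hS : Convex ℝ S) (h0 : (0 : ℝ) ∈ S) (h : EqOn (aeval D P w) 0 S) :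
    ∃ u, aeval D P u = 0 ∧ EqOn w u S := by
  obtain ⟨u, hu, hd⟩ := exists_aeval_D_eq_zero hP fun j => (D ^ j) w 0
  have := eqOn_zero_of_aeval_D_eqOn_zero hP hS h0 (u := w - u) (by simpa [hu] using h)
    fun j hj => by simp [hd j hj]
  exact ⟨u, hu, fun x hx => by simpa [sub_eq_zero] using this hx⟩

theorem norm_le_of_norm_D_sub_smul_le {a : ℂ} (ha : 0 < a.im) {u : SmoothFun} {M : ℝ}
    (hM : ∀ x, 0 ≤ x → ‖(D u - a • u : SmoothFun) x‖ ≤ M) {x : ℝ} (hx : 0 ≤ x) :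
    ‖u x‖ ≤ Real.exp (-a.im * x) * ‖u 0‖ + M / a.im := by
  have hM0 : 0 ≤ M := (norm_nonneg _).trans (hM 0 le_rfl)
  have hB (y : ℝ) : HasDerivAt (fun y => ‖u 0‖ + M / a.im * Real.exp (a.im * y))
      (M * Real.exp (a.im * y)) y := by
    have := ((((hasDerivAt_id y).const_mul a.im).exp).const_mul (M / a.im)).const_add ‖u 0‖
    refine this.congr_deriv ?_
    simp only [id_eq, mul_one]
    field_simp
  have hv : ‖modulate (-a) u x‖ ≤ ‖u 0‖ + M / a.im * Real.exp (a.im * x) := by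
    refine image_norm_le_of_norm_deriv_right_le_deriv_boundary
      (f' := fun y => I * D (modulate (-a) u) y)
      (modulate (-a) u).continuous.continuousOn
      (fun y _ => ((modulate (-a) u).hasDerivAt y).hasDerivWithinAt) ?_ hB (fun y hy => ?_)
      (right_mem_Icc.2 hx)
    · simp only [modulate_apply, mul_neg, ofReal_zero, mul_zero, exp_zero, one_mul, Real.exp_zero,
        mul_one, le_add_iff_nonneg_right]
      positivity
    · rw [norm_mul, norm_I, one_mul, D_modulate_neg, norm_modulate_apply, mul_comm, neg_im, neg_neg]
      gcongr
      exact hM y hy.1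
  calc ‖u x‖ = Real.exp (-a.im * x) * ‖modulate (-a) u x‖ := by
        simp [norm_modulate_apply, ← mul_assoc, ← Real.exp_add]
    _ ≤ Real.exp (-a.im * x) * (‖u 0‖ + M / a.im * Real.exp (a.im * x)) := by gcongr
    _ = Real.exp (-a.im * x) * ‖u 0‖ + M / a.im * Real.exp (-a.im * x + a.im * x) := by
        rw [Real.exp_add]
        ring
    _ = Real.exp (-a.im * x) * ‖u 0‖ + M / a.im := by simp

theorem tendsto_zero_of_tendsto_D_sub_smul {a : ℂ} (ha : 0 < a.im) {u : SmoothFun}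
    (h : Tendsto (D u - a • u : SmoothFun) atTop (𝓝 0)) : Tendsto u atTop (𝓝 0) := by
  rw [NormedAddGroup.tendsto_nhds_zero] at h ⊢
  intro ε hε
  obtain ⟨X, hX⟩ := eventually_atTop.1 (h (a.im * (ε / 2)) (by positivity))
  have hu (x : ℝ) (hx : 0 ≤ x) :
      ‖u (x + X)‖ ≤ Real.exp (-a.im * x) * ‖u X‖ + ε / 2 := by
    have hD : D (translate X u) - a • translate X u = translate X (D u - a • u) := by
      rw [map_sub, map_smul, ← Module.End.mul_apply, ← (commute_translate_D X).eq,
        Module.End.mul_apply]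
    have := norm_le_of_norm_D_sub_smul_le (u := translate X u) ha
      (fun y hy => by rw [hD]; exact (hX (y + X) (by linarith)).le) hx
    rwa [mul_div_cancel_left₀ _ ha.ne', translate_apply, translate_apply, zero_add] at this
  have hexp : Tendsto (fun x => Real.exp (-a.im * x) * ‖u X‖) atTop (𝓝 0) := by
    simpa using (Real.tendsto_exp_atBot.comp
      (tendsto_id.const_mul_atTop_of_neg (neg_lt_zero.2 ha))).mul_const ‖u X‖
  have hev : ∀ᶠ x in atTop, ‖u (x + X)‖ < ε := by
    filter_upwards [eventually_ge_atTop 0, hexp.eventually_lt_const (half_pos hε)] with x hx hx'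
    linarith [hu x hx]
  simpa using (tendsto_atTop_add_const_right _ (-X) tendsto_id).eventually hev

theorem tendsto_zero_of_aeval_D_eq_zero {P : ℂ[X]} (hP : P ≠ 0)
    (hroots : ∀ a, P.IsRoot a → 0 < a.im) {u : SmoothFun} (hu : aeval D P u = 0) :
    Tendsto u atTop (𝓝 0) := by
  induction hP using polynomial_induction_on_roots generalizing u with
  | C b hb =>
    obtain rfl : u = 0 := by simpa [hb, Module.algebraMap_end_apply] using hu
    exact tendsto_const_nhds
  | mul_X_sub_C P a _ ih =>
    rw [aeval_D_mul_X_sub_C] at hu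
    exact tendsto_zero_of_tendsto_D_sub_smul (hroots a (by simp))
      (ih (fun b hb => hroots b (root_mul_right_of_isRoot _ hb)) hu)

theorem translate_eq_of_D_sub_smul_eq_zero {a : ℂ} {u : SmoothFun} (h : D u - a • u = 0) (t : ℝ) :
    translate t u = exp (I * a * t) • u := by
  have hu := eqOn_exp_of_D_sub_smul_eqOn_zero convex_univ (mem_univ 0) (u := u) (a := a)
    (by simp [h, EqOn])
  ext x
  change u (x + t) = exp (I * a * t) * u x
  rw [hu (mem_univ (x + t)), hu (mem_univ x)]
  simp [← mul_assoc, ← Complex.exp_add, mul_add, add_comm]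

theorem eq_zero_of_translate_eq_smul {u : SmoothFun} {z : ℂ} (hz : 1 ≤ ‖z‖)
    (h : translate 1 u = z • u) (hu : Tendsto u atTop (𝓝 0)) : u = 0 := by
  ext x
  have hmono (k : ℕ) : ‖u x‖ ≤ ‖u (x + k)‖ := by
    induction k with
    | zero => simp
    | succ k ih =>
      have hk : u (x + k + 1) = z * u (x + k) := congrFun (congrArg Subtype.val h) (x + k)
      rw [Nat.cast_succ, ← add_assoc, hk, norm_mul]
      exact ih.trans (le_mul_of_one_le_left (norm_nonneg _) hz)
  have hlim : Tendsto (fun k : ℕ => ‖u (x + k)‖) atTop (𝓝 0) :=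
    tendsto_zero_iff_norm_tendsto_zero.1
      (hu.comp (tendsto_atTop_add_const_left _ x tendsto_natCast_atTop_atTop))
  simpa using ge_of_tendsto' hlim hmono

theorem eq_zero_of_tendsto_zero {P : ℂ[X]} (hP : P ≠ 0) (hroots : ∀ a, P.IsRoot a → a.im ≤ 0)
    {u : SmoothFun} (hu : aeval D P u = 0) (hlim : Tendsto u atTop (𝓝 0)) : u = 0 := by
  induction hP using polynomial_induction_on_roots generalizing u with
  | C b hb => simpa [hb, Module.algebraMap_end_apply] using hu
  | mul_X_sub_C P a _ ih =>
    set z := exp (I * a * (1 : ℝ)) with hz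
    have hz1 : 1 ≤ ‖z‖ := by simpa [hz, Complex.norm_exp] using hroots a (by simp)
    -- `aeval D P u` solves the first-order equation, so the difference `u(· + 1) - z u`, which
    -- unlike `D u - a u` visibly decays, is annihilated by `aeval D P`.
    have hv : aeval D P (translate 1 u - z • u) = 0 := by
      have hPu : D (aeval D P u) - a • aeval D P u = 0 := by
        rw [mul_comm] at hu
        simpa [Module.End.mul_apply, Module.algebraMap_end_apply] using hu
      have hcomm := LinearMap.congr_fun (semiconjBy_aeval (commute_translate_D 1) P) u
      rw [map_sub, map_smul, ← translate_eq_of_D_sub_smul_eq_zero hPu]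
      exact sub_eq_zero.2 hcomm.symm
    have hvlim : Tendsto (translate 1 u - z • u : SmoothFun) atTop (𝓝 0) := by
      have := (hlim.comp (tendsto_atTop_add_const_right _ 1 tendsto_id)).sub (hlim.const_mul z)
      rwa [mul_zero, sub_zero] at this
    exact eq_zero_of_translate_eq_smul hz1
      (sub_eq_zero.1 (ih (fun b hb => hroots b (root_mul_right_of_isRoot _ hb)) hv hvlim)) hlim

theorem aeval_D_eq_zero_of_dvd {P Q : ℂ[X]} (h : P ∣ Q) {u : SmoothFun} (hu : aeval D P u = 0) :
    aeval D Q u = 0 := by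
  obtain ⟨R, rfl⟩ := h
  rw [mul_comm, map_mul, Module.End.mul_apply, hu, map_zero]

theorem exists_add_eq_of_aeval_D_mul_eq_zero {P Q : ℂ[X]} (h : IsCoprime P Q) {u : SmoothFun}
    (hu : aeval D (P * Q) u = 0) : ∃ v w, aeval D P v = 0 ∧ aeval D Q w = 0 ∧ v + w = u := by
  have : u ∈ LinearMap.ker (aeval D P) ⊔ LinearMap.ker (aeval D Q) := by
    rwa [sup_ker_aeval_eq_ker_aeval_mul_of_coprime D h, LinearMap.mem_ker]
  obtain ⟨v, hv, w, hw, rfl⟩ := Submodule.mem_sup.1 this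
  exact ⟨v, w, hv, hw, rfl⟩

theorem eq_zero_of_aeval_D_eq_zero_of_isCoprime {P Q : ℂ[X]} (h : IsCoprime P Q) {u : SmoothFun}
    (hP : aeval D P u = 0) (hQ : aeval D Q u = 0) : u = 0 :=
  Submodule.disjoint_def.1 (disjoint_ker_aeval_of_isCoprime D h) u hP hQ

theorem tendsto_zero_of_aeval_D_upperFactor_eq_zero {P : ℂ[X]} {u : SmoothFun}
    (hu : aeval D (upperFactor P) u = 0) : Tendsto u atTop (𝓝 0) :=
  tendsto_zero_of_aeval_D_eq_zero (upperFactor_ne_zero P)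
    (fun _ => im_pos_of_isRoot_upperFactor) hu

theorem aeval_D_upperFactor_eq_zero {P : ℂ[X]} (hP : P ≠ 0) {u : SmoothFun}
    (hu : aeval D P u = 0) (hlim : Tendsto u atTop (𝓝 0)) : aeval D (upperFactor P) u = 0 := by
  obtain ⟨Q, hQ, hPQ, hroots⟩ := exists_eq_upperFactor_mul hP
  have hcop : IsCoprime (upperFactor P) Q := isCoprime_of_forall_isRoot_not_isRoot
    fun a ha hQa => (hroots a hQa).not_gt (im_pos_of_isRoot_upperFactor ha)
  rw [hPQ] at hu
  obtain ⟨v, w, hv, hw, rfl⟩ := exists_add_eq_of_aeval_D_mul_eq_zero hcop hu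
  have hvlim := tendsto_zero_of_aeval_D_upperFactor_eq_zero hv
  have hwlim : Tendsto w atTop (𝓝 0) := by simpa using hlim.sub hvlim
  rw [eq_zero_of_tendsto_zero hQ hroots hw hwlim, add_zero, hv]

theorem exists_aeval_D_upperFactor_eq_zero_eqOn {P : ℂ[X]} (hP : P ≠ 0) {w : SmoothFun}
    (hw : ∀ x, 0 < x → polyOp P w x = 0) (hlim : Tendsto w atTop (𝓝 0)) :
    ∃ u, aeval D (upperFactor P) u = 0 ∧ EqOn w u (Ici 0) := by
  have hIoi : EqOn (aeval D P w) 0 (Ioi 0) := fun x hx => by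
    rw [← polyOp_eq_aeval_D, hw x hx, Pi.zero_apply]
  have hIci := hIoi.closure (aeval D P w).continuous continuous_const
  rw [closure_Ioi] at hIci
  obtain ⟨u, hu, hwu⟩ := exists_aeval_D_eq_zero_eqOn hP (convex_Ici 0) self_mem_Ici hIci
  have hulim : Tendsto u atTop (𝓝 0) := hlim.congr' ((eventually_ge_atTop 0).mono hwu)
  exact ⟨u, aeval_D_upperFactor_eq_zero hP hu hulim, hwu⟩

end SmoothFun

section Transmission

open Polynomial SmoothFun Topology

/-- `p = (u, v)` solves the transmission problem `P(D) u = 0`, `Q(D) v = 0` with data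
`D ^ j (u + (-1) ^ (j + 1) v) = c j` at `0` for `j < N`. The index `j` counts from `0`. -/
def IsTransmissionPair (P Q : ℂ[X]) (N : ℕ) (c : ℕ → ℂ) (p : SmoothFun × SmoothFun) : Prop :=
  aeval D P p.1 = 0 ∧ aeval D Q p.2 = 0 ∧
    ∀ j < N, (D ^ j) p.1 0 + (-1) ^ (j + 1) * (D ^ j) p.2 0 = c j

theorem isTransmissionPair_iff_sub_reflect {P Q : ℂ[X]} {N : ℕ} {c : ℕ → ℂ} {u v : SmoothFun} :
    IsTransmissionPair P Q N c (u, v) ↔ aeval D P u = 0 ∧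
      aeval D (Q.comp (-X)) (reflect v) = 0 ∧ ∀ j < N, (D ^ j) (u - reflect v) 0 = c j := by
  have hreflect := map_eq_zero_iff (x := aeval D Q v) _ reflect_injective
  simp [IsTransmissionPair, aeval_D_comp_neg_X_reflect, hreflect, D_pow_reflect_apply, pow_succ,
    sub_eq_add_neg]

theorem existsUnique_isTransmissionPair {P Q : ℂ[X]} (hP : P ≠ 0) (hQ : Q ≠ 0)
    (h : ∀ a, P.IsRoot a → ¬ Q.IsRoot (-a)) (c : ℕ → ℂ) :
    ∃! p, IsTransmissionPair P Q (P.natDegree + Q.natDegree) c p := by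
  set Q' := Q.comp (-X) with hQ'
  have hQ'0 : Q' ≠ 0 := by simpa [hQ', comp_eq_zero_iff] using hQ
  have hcop : IsCoprime P Q' :=
    isCoprime_of_forall_isRoot_not_isRoot fun a ha => by simpa [hQ', IsRoot] using h a ha
  have hdeg : (P * Q').natDegree = P.natDegree + Q.natDegree := by
    rw [natDegree_mul hP hQ'0, hQ', natDegree_comp, natDegree_neg, natDegree_X, mul_one]
  have hPQ := mul_ne_zero hP hQ'0
  rw [← hdeg]
  refine existsUnique_of_exists_of_unique ?_ ?_
  · obtain ⟨w, hw, hwc⟩ := exists_aeval_D_eq_zero hPQ c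
    obtain ⟨u, v, hu, hv, rfl⟩ := exists_add_eq_of_aeval_D_mul_eq_zero hcop hw
    refine ⟨(u, -reflect v), isTransmissionPair_iff_sub_reflect.2 ?_⟩
    simpa [reflect_reflect, hu, hv, ← hQ'] using hwc
  · rintro ⟨u₁, v₁⟩ ⟨u₂, v₂⟩ h₁ h₂
    obtain ⟨hu₁, hv₁, hc₁⟩ := isTransmissionPair_iff_sub_reflect.1 h₁
    obtain ⟨hu₂, hv₂, hc₂⟩ := isTransmissionPair_iff_sub_reflect.1 h₂
    have hu : aeval D P (u₁ - u₂) = 0 := by rw [map_sub, hu₁, hu₂, sub_zero]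
    have hv : aeval D Q' (reflect v₁ - reflect v₂) = 0 := by rw [map_sub, hv₁, hv₂, sub_zero]
    have hw : u₁ - u₂ = reflect v₁ - reflect v₂ := by
      refine sub_eq_zero.1 (eq_zero_of_aeval_D_eq_zero hPQ ?_ fun j hj => ?_)
      · rw [map_sub, aeval_D_eq_zero_of_dvd (dvd_mul_right P Q') hu,
          aeval_D_eq_zero_of_dvd (dvd_mul_left Q' P) hv, sub_zero]
      · rw [sub_sub_sub_comm, map_sub]
        exact sub_eq_zero.2 ((hc₁ j hj).trans (hc₂ j hj).symm)
    have hu0 := eq_zero_of_aeval_D_eq_zero_of_isCoprime hcop hu (hw ▸ hv)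
    rw [hu0, eq_comm, ← map_sub, map_eq_zero_iff _ reflect_injective] at hw
    exact Prod.ext (sub_eq_zero.1 hu0) (sub_eq_zero.1 hw)

variable {n m : ℕ} {A₁ : MvPolynomial (Fin n) ℂ} {A₂ : MvPolynomial (Fin (n + 1)) ℂ}
  {ξ : EuclideanSpace ℝ (Fin (n - 1))} {q : ℂ}

theorem fundSol_of_isTransmissionPair {p : Fin (2 * m) → SmoothFun × SmoothFun}
    (hp : ∀ k : Fin (2 * m), IsTransmissionPair (upperFactor (polA1 n A₁ ξ))
      (upperFactor (polA2 n A₂ ξ q)) (2 * m) (Pi.single (k : ℕ) 1) (p k)) :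
    FundSol n m A₁ A₂ ξ q ![fun k => (p k).1, fun k => (p k).2] := by
  refine ⟨Fin.forall_fin_two.2 ⟨fun k => (p k).1.contDiff, fun k => (p k).2.contDiff⟩,
    fun k x _ => ?_, fun k x _ => ?_, fun j k => ?_,
    Fin.forall_fin_two.2 ⟨fun k => tendsto_zero_of_aeval_D_upperFactor_eq_zero (hp k).1,
      fun k => tendsto_zero_of_aeval_D_upperFactor_eq_zero (hp k).2.1⟩⟩
  · exact (polyOp_eq_aeval_D _ _ x).trans
      (by rw [aeval_D_eq_zero_of_dvd (upperFactor_dvd _) (hp k).1]; rfl)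
  · exact (polyOp_eq_aeval_D _ _ x).trans
      (by rw [aeval_D_eq_zero_of_dvd (upperFactor_dvd _) (hp k).2.1]; rfl)
  · have := (hp k).2.2 j j.2
    simpa [D_pow_apply, Pi.single_apply, ← Fin.ext_iff] using this

theorem FundSol.exists_isTransmissionPair {ω : Fin 2 → Fin (2 * m) → ℝ → ℂ}
    (h₁ : polA1 n A₁ ξ ≠ 0) (h₂ : polA2 n A₂ ξ q ≠ 0) (hω : FundSol n m A₁ A₂ ξ q ω)
    (k : Fin (2 * m)) :
    ∃ p, IsTransmissionPair (upperFactor (polA1 n A₁ ξ)) (upperFactor (polA2 n A₂ ξ q)) (2 * m)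
      (Pi.single (k : ℕ) 1) p ∧ EqOn (ω 0 k) p.1 (Ici 0) ∧ EqOn (ω 1 k) p.2 (Ici 0) := by
  obtain ⟨hsmooth, hode₁, hode₂, htrans, hlim⟩ := hω
  let w (i : Fin 2) : SmoothFun := ⟨ω i k, hsmooth i k⟩
  obtain ⟨u, hu, hwu⟩ :=
    exists_aeval_D_upperFactor_eq_zero_eqOn h₁ (w := w 0) (hode₁ k) (hlim 0 k)
  obtain ⟨v, hv, hwv⟩ :=
    exists_aeval_D_upperFactor_eq_zero_eqOn h₂ (w := w 1) (hode₂ k) (hlim 1 k)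
  refine ⟨(u, v), ⟨hu, hv, fun j hj => ?_⟩, hwu, hwv⟩
  rw [← eqOn_D_pow (uniqueDiffOn_Ici 0) hwu j self_mem_Ici,
    ← eqOn_D_pow (uniqueDiffOn_Ici 0) hwv j self_mem_Ici, D_pow_apply, D_pow_apply]
  simpa [Pi.single_apply, Fin.ext_iff] using htrans ⟨j, hj⟩ k

end Transmission

theorem fundamental_solution_exists_unique_general (n m : ℕ)
    (A₁ : MvPolynomial (Fin n) ℂ) (A₂ : MvPolynomial (Fin (n + 1)) ℂ)
    (ξ : EuclideanSpace ℝ (Fin (n - 1))) (q : ℂ)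
    (h₁ : polA1 n A₁ ξ ≠ 0) (h₂ : polA2 n A₂ ξ q ≠ 0)
    (hcard : ((polA1 n A₁ ξ).roots.filter fun z => 0 < z.im).card +
      ((polA2 n A₂ ξ q).roots.filter fun z => 0 < z.im).card = 2 * m) :
    (∃ ω : Fin 2 → Fin (2 * m) → ℝ → ℂ, FundSol n m A₁ A₂ ξ q ω) ∧
    (∀ ω ω' : Fin 2 → Fin (2 * m) → ℝ → ℂ, FundSol n m A₁ A₂ ξ q ω →
      FundSol n m A₁ A₂ ξ q ω' → ∀ i k, EqOn (ω i k) (ω' i k) (Ici 0)) := by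
  have key (k : Fin (2 * m)) := existsUnique_isTransmissionPair
    (upperFactor_ne_zero (polA1 n A₁ ξ)) (upperFactor_ne_zero (polA2 n A₂ ξ q))
    not_isRoot_neg_upperFactor (Pi.single (k : ℕ) 1)
  simp only [natDegree_upperFactor, hcard] at key
  choose p hp hunique using key
  refine ⟨⟨_, fundSol_of_isTransmissionPair hp⟩, fun ω ω' hω hω' i k => ?_⟩
  obtain ⟨r, hr, hr₁, hr₂⟩ := hω.exists_isTransmissionPair h₁ h₂ k
  obtain ⟨r', hr', hr₁', hr₂'⟩ := hω'.exists_isTransmissionPair h₁ h₂ k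
  obtain rfl := (hunique k r hr).trans (hunique k r' hr').symm
  fin_cases i
  exacts [hr₁.trans hr₁'.symm, hr₂.trans hr₂'.symm]

/-- For a properly elliptic symbol `A₁` and a properly parameter-elliptic
symbol `A₂`, and for every fixed `ξ' ≠ 0` and `q ∈ Σ̄`, the ODE system of the transmission
model problem has exactly one fundamental solution `ω` (uniqueness on `[0,∞)`). -/
theorem fundamental_solution_exists_unique
    (n m : ℕ) (hn : 2 ≤ n) (hm : 1 ≤ m) (θ : ℝ) (hθ : θ ∈ Set.Ico 0 Real.pi)
    (A₁ : MvPolynomial (Fin n) ℂ) (A₂ : MvPolynomial (Fin (n + 1)) ℂ)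
    (hA₁hom : A₁.IsHomogeneous (2 * m)) (hA₂hom : A₂.IsHomogeneous (2 * m))
    (hA₁ell : ∀ ξ : EuclideanSpace ℝ (Fin n), ξ ≠ 0 →
      MvPolynomial.eval (fun i => (ξ i : ℂ)) A₁ ≠ 0)
    (hA₁prop : ∀ ξ : EuclideanSpace ℝ (Fin (n - 1)), ξ ≠ 0 →
      ((polA1 n A₁ ξ).roots.filter fun z => 0 < z.im).card = m ∧
      ((polA1 n A₁ ξ).roots.filter fun z => z.im < 0).card = m)
    (hA₂ell : ∀ (ξ : EuclideanSpace ℝ (Fin n)) (q : ℂ), q ∈ sector m θ → ¬(ξ = 0 ∧ q = 0) →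
      MvPolynomial.eval (fun i : Fin (n + 1) =>
        if h : (i : ℕ) < n then (ξ ⟨i, h⟩ : ℂ) else q) A₂ ≠ 0)
    (hA₂prop : ∀ (ξ : EuclideanSpace ℝ (Fin (n - 1))) (q : ℂ), q ∈ sector m θ →
      ¬(ξ = 0 ∧ q = 0) →
      ((polA2 n A₂ ξ q).roots.filter fun z => 0 < z.im).card = m ∧
      ((polA2 n A₂ ξ q).roots.filter fun z => z.im < 0).card = m)
    (ξ : EuclideanSpace ℝ (Fin (n - 1))) (hξ : ξ ≠ 0) (q : ℂ) (hq : q ∈ sector m θ) :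
    (∃ ω : Fin 2 → Fin (2 * m) → ℝ → ℂ, FundSol n m A₁ A₂ ξ q ω) ∧
    (∀ ω ω' : Fin 2 → Fin (2 * m) → ℝ → ℂ, FundSol n m A₁ A₂ ξ q ω →
      FundSol n m A₁ A₂ ξ q ω' → ∀ i k, EqOn (ω i k) (ω' i k) (Ici 0)) := by
  obtain ⟨hcard₁, -⟩ := hA₁prop ξ hξ
  obtain ⟨hcard₂, -⟩ := hA₂prop ξ q hq fun h => hξ h.1
  exact fundamental_solution_exists_unique_general n m A₁ A₂ ξ q
    (ne_zero_of_card_filter_roots_pos (hcard₁ ▸ hm))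
    (ne_zero_of_card_filter_roots_pos (hcard₂ ▸ hm)) (by omega)
end
end
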